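/- There exist constants k₀ ≥ 1, δ₀ > 0 and C > 0 with the following property. Let ν ∈ (0,1], k ∈ ℤ with |k| ≥ 1, λ ∈ ℝ, ε ∈ [0, δ₀), and set L = (|k|/ν)^{1/3}. Assume L ≥ 6|k| or L ≥ |k| ≥ k₀. Let φ₁, φ₂ : [−1,1] → ℂ be four times continuously differentiable with: φ₁(±1) = 0, φ₁'(1) = 1, φ₁'(−1) = 0; φ₂(±1) = 0, φ₂'(−1) = 1, φ₂'(1) = 0; and, with w_i = φ_i'' − k²φ_i (i = 1,2), −ν(w_i'' − k²w_i) + ik(y−λ)w_i − ε·ν^{1/3}|k|^{2/3}w_i = 0 on [−1,1]. Then ‖w₁‖_{L∞} ≤ C·ν^{−1/2}(1+|k|·|λ−1|)^{1/2}, ‖w₂‖_{L∞} ≤ C·ν^{−1/2}(1+|k|·|λ+1|)^{1/2}, and ‖w₁‖_{L¹} + ‖w₂‖_{L¹} ≤ C. -/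

import Mathlib

/-- The `L¹` norm of a function on the interval `[-1,1]`. -/
noncomputable def nL1 (f : ℝ → ℂ) : ℝ :=
  ∫ y in Set.Icc (-1:ℝ) 1, ‖f y‖

/-- The `L^∞` norm of a function on the interval `[-1,1]`. -/
noncomputable def nLinf (f : ℝ → ℂ) : ℝ :=
  ⨆ y : ↥(Set.Icc (-1:ℝ) 1), ‖f (y : ℝ)‖


namespace OS

/-- Barrier lemma: nonpositivity is propagated by `f' ≤ K f` (where `f > 0`). -/
theorem barrier {f f' : ℝ → ℝ} {a b K : ℝ}
    (hf : ∀ x ∈ Set.Icc a b, HasDerivAt f (f' x) x)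
    (h0 : f a ≤ 0) (hK : ∀ x ∈ Set.Icc a b, 0 < f x → f' x ≤ K * f x) :
    ∀ x ∈ Set.Icc a b, f x ≤ 0 := by
  intro x hx
  have key : ∀ e : ℝ, 0 < e → f x ≤ e * Real.exp ((K + 1) * (x - a)) := by
    intro e he
    have hB : ∀ y, HasDerivAt (fun y => e * Real.exp ((K + 1) * (y - a)))
        (e * (Real.exp ((K + 1) * (y - a)) * (K + 1))) y := by
      intro y
      have h1 : HasDerivAt (fun y => (K + 1) * (y - a)) (K + 1) y := by
        simpa using ((hasDerivAt_id y).sub_const a).const_mul (K + 1)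
      exact (h1.exp).const_mul e
    have := image_le_of_deriv_right_lt_deriv_boundary' (f := f) (f' := f') (a := a) (b := b)
      (fun y hy => (hf y hy).continuousAt.continuousWithinAt)
      (fun y hy => (hf y ⟨hy.1, hy.2.le⟩).hasDerivWithinAt)
      (B := fun y => e * Real.exp ((K + 1) * (y - a)))
      (B' := fun y => e * (Real.exp ((K + 1) * (y - a)) * (K + 1)))
      (by simpa using h0.trans he.le)
      (fun y hy => (hB y).continuousAt.continuousWithinAt)
      (fun y hy => (hB y).hasDerivWithinAt)
      (by
        intro y hy hfy
        have hpos : 0 < e * Real.exp ((K + 1) * (y - a)) := by positivity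
        have := hK y ⟨hy.1, hy.2.le⟩ (by rw [hfy]; exact hpos)
        rw [hfy] at this
        nlinarith)
    exact this hx
  by_contra hcon
  push Not at hcon
  set E := Real.exp ((K + 1) * (x - a)) with hE
  have hEpos : 0 < E := Real.exp_pos _
  have := key (f x / (2 * E)) (by positivity)
  have h2 : f x / (2 * E) * E = f x / 2 := by field_simp
  rw [h2] at this
  linarith

theorem hasDerivAt_normSq' {f : ℝ → ℂ} {f' : ℂ} {x : ℝ} (h : HasDerivAt f f' x) :
    HasDerivAt (fun x => ‖f x‖ ^ 2) (2 * (f' * (starRingEnd ℂ) (f x)).re) x := by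
  have := h.norm_sq
  convert this using 1
  rw [Complex.inner]

theorem re_mul_conj_le (a b : ℂ) : (a * (starRingEnd ℂ) b).re ≤ ‖a‖ * ‖b‖ := by
  have := Complex.re_le_norm (a * (starRingEnd ℂ) b)
  simpa using this

theorem re_mul_conj_ge (a b : ℂ) : -(‖a‖ * ‖b‖) ≤ (a * (starRingEnd ℂ) b).re := by
  have := (abs_le.1 (Complex.abs_re_le_norm (a * (starRingEnd ℂ) b))).1
  simpa using this

/-- The tube lemma. -/
theorem tube {c t0 t1 : ℝ} {W V G q dq u du : ℝ → ℂ} {ρ dρ σ dσ : ℝ → ℝ}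
    (hW : ∀ s ∈ Set.Icc t0 t1, HasDerivAt W (V s) s)
    (hV : ∀ s ∈ Set.Icc t0 t1, HasDerivAt V ((Complex.I * (s:ℂ) + (c:ℂ)) * W s) s)
    (hG : ∀ s ∈ Set.Icc t0 t1, HasDerivAt G (W s) s)
    (hq : ∀ s ∈ Set.Icc t0 t1, HasDerivAt q (dq s) s)
    (hu : ∀ s ∈ Set.Icc t0 t1, HasDerivAt u (du s) s)
    (hρ : ∀ s ∈ Set.Icc t0 t1, HasDerivAt ρ (dρ s) s)
    (hσ : ∀ s ∈ Set.Icc t0 t1, HasDerivAt σ (dσ s) s)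
    (hρ0 : ∀ s ∈ Set.Icc t0 t1, 0 < ρ s) (hσ0 : ∀ s ∈ Set.Icc t0 t1, 0 < σ s)
    (cρ : ContinuousOn dρ (Set.Icc t0 t1)) (cσ : ContinuousOn dσ (Set.Icc t0 t1))
    (h1 : ∀ s ∈ Set.Icc t0 t1, ‖(Complex.I * (s:ℂ) + (c:ℂ)) - q s ^ 2 - dq s‖
      ≤ dρ s + 2 * (q s).re * ρ s - ρ s ^ 2)
    (h2 : ∀ s ∈ Set.Icc t0 t1, ‖1 - du s - q s * u s‖ + ‖u s‖ * ρ s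
      ≤ dσ s + ((q s).re - ρ s) * σ s)
    (hX0 : ‖V t0 - q t0 * W t0‖ ≤ ρ t0 * ‖W t0‖)
    (hY0 : ‖G t0 - u t0 * W t0‖ ≤ σ t0 * ‖W t0‖) :
    ∀ s ∈ Set.Icc t0 t1, ‖V s - q s * W s‖ ≤ ρ s * ‖W s‖ ∧ ‖G s - u s * W s‖ ≤ σ s * ‖W s‖ := by
  have cρ' : ContinuousOn ρ (Set.Icc t0 t1) := fun y hy =>
    (hρ y hy).continuousAt.continuousWithinAt
  have cσ' : ContinuousOn σ (Set.Icc t0 t1) := fun y hy =>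
    (hσ y hy).continuousAt.continuousWithinAt
  have cq' : ContinuousOn q (Set.Icc t0 t1) := fun y hy =>
    (hq y hy).continuousAt.continuousWithinAt
  obtain ⟨K1, hK1⟩ := isCompact_Icc.exists_bound_of_continuousOn
    (cρ.div cρ' (fun y hy => (hρ0 y hy).ne'))
  obtain ⟨K2, hK2⟩ := isCompact_Icc.exists_bound_of_continuousOn
    (((Complex.continuous_re.comp_continuousOn cq').sub cρ').add
      (cσ.div cσ' (fun y hy => (hσ0 y hy).ne')))
  have hX : ∀ s ∈ Set.Icc t0 t1, HasDerivAt (fun s => V s - q s * W s)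
      (-q s * (V s - q s * W s) + ((Complex.I * (s:ℂ) + (c:ℂ)) - q s ^ 2 - dq s) * W s) s := by
    intro s hs
    have := (hV s hs).sub ((hq s hs).mul (hW s hs))
    refine this.congr_deriv ?_
    ring
  have hY : ∀ s ∈ Set.Icc t0 t1, HasDerivAt (fun s => G s - u s * W s)
      ((1 - du s - q s * u s) * W s - u s * (V s - q s * W s)) s := by
    intro s hs
    have := (hG s hs).sub ((hu s hs).mul (hW s hs))
    refine this.congr_deriv ?_
    ring
  have first : ∀ s ∈ Set.Icc t0 t1, ‖V s - q s * W s‖ ≤ ρ s * ‖W s‖ := by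
    have := barrier (K := K1)
      (f := fun s => ‖V s - q s * W s‖ ^ 2 - ρ s ^ 2 * ‖W s‖ ^ 2)
      (fun s hs => (hasDerivAt_normSq' (hX s hs)).sub
        (((hρ s hs).pow 2).mul (hasDerivAt_normSq' (hW s hs)))) (a := t0) (b := t1) ?_ ?_
    · intro s hs
      have h := this s hs
      have hp := hρ0 s hs
      apply abs_le_of_sq_le_sq' _ (by positivity) |>.2
      nlinarith [h]
    · have hn : 0 ≤ ‖V t0 - q t0 * W t0‖ := norm_nonneg _
      have := pow_le_pow_left₀ hn hX0 2
      nlinarith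
    · intro s hs hpos
      have hp := hρ0 s hs
      set X := V s - q s * W s with hXd
      set R := (Complex.I * (s:ℂ) + (c:ℂ)) - q s ^ 2 - dq s with hR
      have hVX : V s = X + q s * W s := by rw [hXd]; ring
      set x := ‖X‖ with hx
      set w := ‖W s‖ with hw
      set A := (q s).re with hA
      have hx0 : 0 ≤ x := norm_nonneg _
      have hw0 : 0 ≤ w := norm_nonneg _
      have e1 : ((-q s * X + R * W s) * (starRingEnd ℂ) X).re ≤ -A * x ^ 2 + ‖R‖ * w * x := by
        have a1 : ((-q s * X + R * W s) * (starRingEnd ℂ) X)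
            = -q s * (X * (starRingEnd ℂ) X) + (R * W s) * (starRingEnd ℂ) X := by ring
        rw [a1, Complex.mul_conj, Complex.add_re]
        have a2 := re_mul_conj_le (R * W s) X
        rw [norm_mul] at a2
        have a3 : (-q s * ((Complex.normSq X : ℝ) : ℂ)).re = -A * x ^ 2 := by
          rw [Complex.re_mul_ofReal, Complex.normSq_eq_norm_sq]; simp [hA, hx]
        rw [a3]; linarith
      have e2 : A * w ^ 2 - x * w ≤ (V s * (starRingEnd ℂ) (W s)).re := by
        have a1 : V s * (starRingEnd ℂ) (W s)
            = q s * (W s * (starRingEnd ℂ) (W s)) + X * (starRingEnd ℂ) (W s) := by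
          rw [hVX]; ring
        rw [a1, Complex.mul_conj, Complex.add_re]
        have a2 := re_mul_conj_ge X (W s)
        have a3 : (q s * ((Complex.normSq (W s) : ℝ) : ℂ)).re = A * w ^ 2 := by
          rw [Complex.re_mul_ofReal, Complex.normSq_eq_norm_sq]
        rw [a3]; linarith
      have hr := h1 s hs
      have hk := (abs_le.1 (hK1 s hs)).2
      simp only [Pi.div_apply] at hk
      set γ := dρ s / ρ s with hγ
      have hdρ : dρ s = γ * ρ s := by rw [hγ]; field_simp
      have hxw : 0 ≤ x * w := mul_nonneg hx0 hw0
      have hκ : 0 ≤ 2 * A + γ := by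
        have : 0 ≤ (2 * A + γ) * ρ s := by
          have : 0 ≤ ‖R‖ := norm_nonneg _
          nlinarith [sq_nonneg (ρ s)]
        exact nonneg_of_mul_nonneg_left this hp
      have hmain : 2 * ((-q s * X + R * W s) * (starRingEnd ℂ) X).re
          - (((2:ℕ):ℝ) * ρ s ^ (2 - 1) * dρ s * w ^ 2 + ρ s ^ 2 * (2 * (V s * (starRingEnd ℂ) (W s)).re))
          ≤ γ * (x ^ 2 - ρ s ^ 2 * w ^ 2) := by
        have b1 : ρ s ^ 2 * (A * w ^ 2 - x * w) ≤ ρ s ^ 2 * (V s * (starRingEnd ℂ) (W s)).re :=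
          mul_le_mul_of_nonneg_left e2 (by positivity)
        have b2 : ‖R‖ * (x * w) ≤ (dρ s + 2 * A * ρ s - ρ s ^ 2) * (x * w) :=
          mul_le_mul_of_nonneg_right hr hxw
        have b3 : 0 ≤ (2 * A + γ) * (x - ρ s * w) ^ 2 := mul_nonneg hκ (sq_nonneg _)
        rw [hdρ] at b2 ⊢
        rw [show (2 - 1 : ℕ) = 1 from rfl, pow_one, Nat.cast_ofNat]
        nlinarith
      refine (le_trans hmain ?_)
      exact mul_le_mul_of_nonneg_right hk hpos.le
  have second : ∀ s ∈ Set.Icc t0 t1, ‖G s - u s * W s‖ ≤ σ s * ‖W s‖ := by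
    have := barrier (K := K2)
      (f := fun s => ‖G s - u s * W s‖ ^ 2 - σ s ^ 2 * ‖W s‖ ^ 2)
      (fun s hs => (hasDerivAt_normSq' (hY s hs)).sub
        (((hσ s hs).pow 2).mul (hasDerivAt_normSq' (hW s hs)))) (a := t0) (b := t1) ?_ ?_
    · intro s hs
      have h := this s hs
      have hp := hσ0 s hs
      apply abs_le_of_sq_le_sq' _ (by positivity) |>.2
      nlinarith [h]
    · have hn : 0 ≤ ‖G t0 - u t0 * W t0‖ := norm_nonneg _
      have := pow_le_pow_left₀ hn hY0 2
      nlinarith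
    · intro s hs hpos
      have hp := hσ0 s hs
      have hp' := hρ0 s hs
      have hfirst := first s hs
      set X := V s - q s * W s with hXd
      set Y := G s - u s * W s with hYd
      set R := 1 - du s - q s * u s with hR
      have hVX : V s = X + q s * W s := by rw [hXd]; ring
      set x := ‖X‖ with hx
      set y := ‖Y‖ with hy
      set w := ‖W s‖ with hw
      set A := (q s).re with hA
      have hx0 : 0 ≤ x := norm_nonneg _
      have hy0 : 0 ≤ y := norm_nonneg _
      have hw0 : 0 ≤ w := norm_nonneg _
      have e1 : ((R * W s - u s * X) * (starRingEnd ℂ) Y).re ≤ (‖R‖ * w + ‖u s‖ * x) * y := by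
        refine (re_mul_conj_le _ _).trans ?_
        apply mul_le_mul_of_nonneg_right _ hy0
        refine (norm_sub_le _ _).trans ?_
        rw [norm_mul, norm_mul]
      have e2 : A * w ^ 2 - x * w ≤ (V s * (starRingEnd ℂ) (W s)).re := by
        have a1 : V s * (starRingEnd ℂ) (W s)
            = q s * (W s * (starRingEnd ℂ) (W s)) + X * (starRingEnd ℂ) (W s) := by
          rw [hVX]; ring
        rw [a1, Complex.mul_conj, Complex.add_re]
        have a2 := re_mul_conj_ge X (W s)
        have a3 : (q s * ((Complex.normSq (W s) : ℝ) : ℂ)).re = A * w ^ 2 := by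
          rw [Complex.re_mul_ofReal, Complex.normSq_eq_norm_sq]
        rw [a3]; linarith
      have e3 : (A - ρ s) * w ^ 2 ≤ (V s * (starRingEnd ℂ) (W s)).re := by nlinarith
      have e4 : (‖R‖ * w + ‖u s‖ * x) * y ≤ (‖R‖ + ‖u s‖ * ρ s) * (y * w) := by
        have : ‖u s‖ * x ≤ ‖u s‖ * (ρ s * w) := mul_le_mul_of_nonneg_left hfirst (norm_nonneg _)
        nlinarith
      have hr := h2 s hs
      have hk := (abs_le.1 (hK2 s hs)).2
      simp only [Pi.div_apply, Pi.add_apply, Pi.sub_apply, Function.comp_apply] at hk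
      set γ := A - ρ s + dσ s / σ s with hγ
      have hdσ : dσ s = (γ - (A - ρ s)) * σ s := by rw [hγ]; field_simp; ring
      have hyw : 0 ≤ y * w := mul_nonneg hy0 hw0
      have hκ : 0 ≤ γ := by
        have : 0 ≤ γ * σ s := by
          have : 0 ≤ ‖R‖ := norm_nonneg _
          have : 0 ≤ ‖u s‖ * ρ s := by positivity
          rw [hdσ] at hr
          nlinarith
        exact nonneg_of_mul_nonneg_left this hp
      have hmain : 2 * ((R * W s - u s * X) * (starRingEnd ℂ) Y).re
          - (((2:ℕ):ℝ) * σ s ^ (2 - 1) * dσ s * w ^ 2 + σ s ^ 2 * (2 * (V s * (starRingEnd ℂ) (W s)).re))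
          ≤ γ * (y ^ 2 - σ s ^ 2 * w ^ 2) := by
        have b1 : σ s ^ 2 * ((A - ρ s) * w ^ 2) ≤ σ s ^ 2 * (V s * (starRingEnd ℂ) (W s)).re :=
          mul_le_mul_of_nonneg_left e3 (by positivity)
        have b2 : (‖R‖ + ‖u s‖ * ρ s) * (y * w) ≤ (dσ s + (A - ρ s) * σ s) * (y * w) :=
          mul_le_mul_of_nonneg_right hr hyw
        have b3 : 0 ≤ γ * (y - σ s * w) ^ 2 := mul_nonneg hκ (sq_nonneg _)
        rw [hdσ] at b2 ⊢
        rw [show (2 - 1 : ℕ) = 1 from rfl, pow_one, Nat.cast_ofNat]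
        nlinarith
      refine (le_trans hmain ?_)
      exact mul_le_mul_of_nonneg_right hk hpos.le
  exact fun s hs => ⟨first s hs, second s hs⟩

end OS


namespace OS

/-- Node data of the validated integrator, in units of `2^(-14)`. -/
structure St where
  x : ℤ
  y : ℤ
  a : ℤ
  b : ℤ
  r : ℤ
  g : ℤ

/-- Evaluate the first argument before applying the second one (kernel evaluation helper). -/
def forceN {α : Type} (n : ℕ) (f : ℕ → α) : α :=
  match n with
  | 0 => f 0
  | m + 1 => f (m + 1)

/-- Evaluate an integer before using it. -/
def forceZ {α : Type} (z : ℤ) (f : ℤ → α) : α :=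
  match z with
  | Int.ofNat n => forceN n (fun n => f (Int.ofNat n))
  | Int.negSucc n => forceN n (fun n => f (Int.negSucc n))

theorem forceN_eq {α : Type} (n : ℕ) (f : ℕ → α) : forceN n f = f n := by
  cases n <;> rfl

theorem forceZ_eq {α : Type} (z : ℤ) (f : ℤ → α) : forceZ z f = f z := by
  cases z <;> simp [forceZ, forceN_eq]

def sl (n : ℕ) : ℤ := ((n : ℤ) - 96) * 1024

/-- iterate `z ↦ r + max A (g z)`-type fixed point for the radius. -/
def fixR (rr am r : ℤ) : ℕ → ℤ → ℤ
  | 0, z => z + 2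
  | n + 1, z => forceZ (r + (max (rr + r * r - 2 * am * r) (rr + z * z - 2 * am * z)) / 262144)
      (fixR rr am r n)

def fixG (B al g : ℤ) : ℕ → ℤ → ℤ
  | 0, z => z + 2
  | n + 1, z => forceZ (g + (max (B - al * g) (B - al * z)) / 262144) (fixG B al g n)

def nsq (a b : ℤ) : ℤ := a * a + b * b

def R0x (C : ℤ) (s t : St) : ℤ := C * 16384 - (s.x * s.x - s.y * s.y) - 262144 * (t.x - s.x)
def R0y (n : ℕ) (s t : St) : ℤ := sl n * 16384 - 2 * s.x * s.y - 262144 * (t.y - s.y)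
def R1x (C : ℤ) (s t : St) : ℤ := C * 16384 - (t.x * t.x - t.y * t.y) - 262144 * (t.x - s.x)
def R1y (n : ℕ) (s t : St) : ℤ := sl (n + 1) * 16384 - 2 * t.x * t.y - 262144 * (t.y - s.y)
def Q0x (s t : St) : ℤ := 268435456 - (s.x * s.a - s.y * s.b) - 262144 * (t.a - s.a)
def Q0y (s t : St) : ℤ := - (s.x * s.b + s.y * s.a) - 262144 * (t.b - s.b)
def Q1x (s t : St) : ℤ := 268435456 - (t.x * t.a - t.y * t.b) - 262144 * (t.a - s.a)
def Q1y (s t : St) : ℤ := - (t.x * t.b + t.y * t.a) - 262144 * (t.b - s.b)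

def dq2 (s t : St) : ℤ := nsq (t.x - s.x) (t.y - s.y)
def du2 (s t : St) : ℤ := nsq (t.a - s.a) (t.b - s.b)

def amgm (M : ℤ) : ℤ := (M / 8053064 + 8053064) / 2 + 1
def uU (a b : ℤ) : ℤ := (nsq a b / 16384 + 16384) / 2 + 1

def getN (C : ℤ) (n : ℕ) (s t : St) : ℤ :=
  amgm (max (nsq (R0x C s t) (R0y n s t)) (nsq (R1x C s t) (R1y n s t)))
def getM (s t : St) : ℤ :=
  amgm (max (nsq (Q0x s t) (Q0y s t)) (nsq (Q1x s t) (Q1y s t)))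
def getU (s t : St) : ℤ := max (uU s.a s.b) (uU t.a t.b)

/-- the checks for one piece -/
def chk (C w : ℤ) (n : ℕ) (s t : St) (N M U : ℤ) : Bool :=
  decide (0 ≤ N) && decide (0 ≤ M) && decide (0 ≤ U) &&
  decide (nsq (R0x C s t) (R0y n s t) ≤ N * N) && decide (nsq (R1x C s t) (R1y n s t) ≤ N * N) &&
  decide (nsq (Q0x s t) (Q0y s t) ≤ M * M) && decide (nsq (Q1x s t) (Q1y s t) ≤ M * M) &&
  decide (nsq s.a s.b ≤ U * U) && decide (nsq t.a t.b ≤ U * U) &&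
  decide (4 * N + dq2 s t + 65536 * w ≤
    4 * (262144 * (t.r - s.r) + 2 * (min s.x t.x) * s.r - s.r * s.r)) &&
  decide (4 * N + dq2 s t + 65536 * w ≤
    4 * (262144 * (t.r - s.r) + 2 * (min s.x t.x) * t.r - t.r * t.r)) &&
  decide (8 * M + dq2 s t + du2 s t + 8 * (U * max s.r t.r) ≤
    8 * (262144 * (t.g - s.g) + (min s.x t.x - max s.r t.r) * s.g)) &&
  decide (8 * M + dq2 s t + du2 s t + 8 * (U * max s.r t.r) ≤
    8 * (262144 * (t.g - s.g) + (min s.x t.x - max s.r t.r) * t.g))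

/-- the checks for one node -/
def nodeChk (s : St) : Bool :=
  decide (0 < s.r) && decide (0 < s.g) && decide (s.g ≤ 40960) &&
  decide (nsq (s.a - 40960) s.b ≤ (40960 - s.g) * (40960 - s.g)) &&
  decide (164 ≤ s.a - s.g)

def exitChk (s : St) : Bool :=
  decide (s.r ≤ 6540) && decide (s.g ≤ 2640) &&
  decide (nsq (s.x - 28378) (s.y - 28378) ≤ (6540 - s.r) * (6540 - s.r)) &&
  decide (nsq (s.a - 4730) (s.b + 4730) ≤ (2640 - s.g) * (2640 - s.g))

def startSt : St := ⟨28378, -28378, 4730, 4730, 6560, 2785⟩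

/-- one Heun step -/
def next (C w : ℤ) (n : ℕ) (s : St) : St :=
  forceZ (C * 16384 - (s.x * s.x - s.y * s.y)) fun fx =>
  forceZ (sl n * 16384 - 2 * s.x * s.y) fun fy =>
  forceZ (s.x + fx / 262144) fun px =>
  forceZ (s.y + fy / 262144) fun py =>
  forceZ (s.x + (fx + C * 16384 - (px * px - py * py)) / 524288) fun x =>
  forceZ (s.y + (fy + sl (n + 1) * 16384 - 2 * px * py) / 524288) fun y =>
  forceZ (268435456 - (s.x * s.a - s.y * s.b)) fun ga =>
  forceZ (- (s.x * s.b + s.y * s.a)) fun gb =>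
  forceZ (s.a + ga / 262144) fun pa =>
  forceZ (s.b + gb / 262144) fun pb =>
  forceZ (s.a + (ga + 268435456 - (x * pa - y * pb)) / 524288) fun a =>
  forceZ (s.b + (gb - (x * pb + y * pa)) / 524288) fun b =>
  forceZ (getN C n s ⟨x, y, a, b, 0, 0⟩ + dq2 s ⟨x, y, a, b, 0, 0⟩ / 4 + 16384 * w + 1) fun rr =>
  forceZ (min s.x x) fun am =>
  forceZ (fixR rr am s.r 14 s.r) fun r =>
  forceZ (max s.r r) fun rm =>
  forceZ (getM s ⟨x, y, a, b, 0, 0⟩ + (dq2 s ⟨x, y, a, b, 0, 0⟩ + du2 s ⟨x, y, a, b, 0, 0⟩) / 8 +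
    getU s ⟨x, y, a, b, 0, 0⟩ * rm + 1) fun B =>
  forceZ (fixG B (am - rm) s.g 14 s.g) fun g =>
  ⟨x, y, a, b, r, g⟩

def go (C w : ℤ) : ℕ → ℕ → St → Bool
  | 0, _, s => nodeChk s && exitChk s
  | m + 1, n, s => match next C w n s with
    | ⟨x, y, a, b, r, g⟩ =>
      nodeChk s && forceZ (getN C n s ⟨x, y, a, b, r, g⟩) fun N =>
      forceZ (getM s ⟨x, y, a, b, r, g⟩) fun M =>
      forceZ (getU s ⟨x, y, a, b, r, g⟩) fun U =>
      chk C w n s ⟨x, y, a, b, r, g⟩ N M U && go C w m (n + 1) ⟨x, y, a, b, r, g⟩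

theorem go1 : go 820 1150 192 0 startSt = true := by decide +kernel
theorem go2 : go 4260 2296 192 0 startSt = true := by decide +kernel
theorem go3 : go 11469 4920 192 0 startSt = true := by decide +kernel

/-- node sequence -/
def seq (C w : ℤ) : ℕ → St
  | 0 => startSt
  | n + 1 => next C w n (seq C w n)

theorem go_sound (C w : ℤ) : ∀ (m n : ℕ), go C w m n (seq C w n) = true →
    (∀ i, n ≤ i → i < n + m → ∃ N M U, chk C w i (seq C w i) (seq C w (i + 1)) N M U = true) ∧
    (∀ i, n ≤ i → i ≤ n + m → nodeChk (seq C w i) = true) ∧ exitChk (seq C w (n + m)) = true := by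
  intro m
  induction m with
  | zero =>
    intro n h
    simp only [go, Bool.and_eq_true] at h
    refine ⟨fun i h1 h2 => by omega, fun i h1 h2 => ?_, h.2⟩
    have : i = n := by omega
    rw [this]; exact h.1
  | succ m ih =>
    intro n h
    simp only [go, Bool.and_eq_true, forceZ_eq] at h
    obtain ⟨h1, h2, h3⟩ := h
    have h3' : go C w m (n + 1) (seq C w (n + 1)) = true := h3
    obtain ⟨a1, a2, a3⟩ := ih (n + 1) h3'
    refine ⟨fun i hi1 hi2 => ?_, fun i hi1 hi2 => ?_, ?_⟩
    · rcases Nat.eq_or_lt_of_le hi1 with h | h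
      · subst h; exact ⟨_, _, _, h2⟩
      · exact a1 i h (by omega)
    · rcases Nat.eq_or_lt_of_le hi1 with h | h
      · subst h; exact h1
      · exact a2 i h (by omega)
    · rw [show n + (m + 1) = n + 1 + m by omega]; exact a3

end OS


namespace OS

theorem norm_le_of_nsq {z : ℂ} {N : ℝ} (hN : 0 ≤ N) (h : z.re * z.re + z.im * z.im ≤ N * N) :
    ‖z‖ ≤ N := by
  have h1 : ‖z‖ ^ 2 ≤ N ^ 2 := by
    rw [Complex.sq_norm, Complex.normSq_apply]; linarith
  exact (abs_le_of_sq_le_sq' h1 hN).2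

/-- linear interpolation on a piece of length `1/16` -/
noncomputable def lin (t0 : ℝ) (p0 p1 : ℂ) (s : ℝ) : ℂ := p0 + ((16 * (s - t0) : ℝ) : ℂ) * (p1 - p0)

noncomputable def rlin (t0 : ℝ) (p0 p1 : ℝ) (s : ℝ) : ℝ := p0 + 16 * (s - t0) * (p1 - p0)

theorem hasDerivAt_rlin (t0 p0 p1 s : ℝ) : HasDerivAt (rlin t0 p0 p1) (16 * (p1 - p0)) s := by
  have h : HasDerivAt (fun s : ℝ => p0 + 16 * (s - t0) * (p1 - p0)) (16 * 1 * (p1 - p0)) s :=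
    ((((hasDerivAt_id s).sub_const t0).const_mul 16).mul_const (p1 - p0)).const_add p0
  exact h.congr_deriv (by ring)

theorem hasDerivAt_lin (t0 : ℝ) (p0 p1 : ℂ) (s : ℝ) :
    HasDerivAt (lin t0 p0 p1) (16 * (p1 - p0)) s := by
  have h0 : HasDerivAt (fun s : ℝ => 16 * (s - t0)) (16 * 1) s :=
    ((hasDerivAt_id s).sub_const t0).const_mul 16
  have h : HasDerivAt (fun s : ℝ => p0 + ((16 * (s - t0) : ℝ) : ℂ) * (p1 - p0))
      (((16 * 1 : ℝ) : ℂ) * (p1 - p0)) s :=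
    ((h0.ofReal_comp).mul_const (p1 - p0)).const_add p0
  exact h.congr_deriv (by push_cast; ring)

theorem conv_norm {τ : ℝ} (h0 : 0 ≤ τ) (h1 : τ ≤ 1) {a b : ℂ} {N : ℝ} (ha : ‖a‖ ≤ N) (hb : ‖b‖ ≤ N) :
    ‖((1 - τ : ℝ) : ℂ) * a + (τ : ℂ) * b‖ ≤ N := by
  refine (norm_add_le _ _).trans ?_
  rw [norm_mul, norm_mul, Complex.norm_real, Complex.norm_real, Real.norm_of_nonneg h0,
    Real.norm_of_nonneg (by linarith)]
  nlinarith [norm_nonneg a, norm_nonneg b]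

theorem tau_norm {τ : ℝ} (h0 : 0 ≤ τ) (h1 : τ ≤ 1) (a b : ℂ) :
    ‖((τ * (1 - τ) : ℝ) : ℂ) * (a * b)‖ ≤ ‖a‖ * ‖b‖ / 4 := by
  rw [norm_mul, norm_mul, Complex.norm_real, Real.norm_of_nonneg (mul_nonneg h0 (by linarith))]
  have : τ * (1 - τ) ≤ 1 / 4 := by nlinarith [sq_nonneg (τ - 1 / 2)]
  nlinarith [mul_nonneg (norm_nonneg a) (norm_nonneg b)]

set_option maxHeartbeats 1600000 in
/-- The tube property on one piece of the piecewise linear approximation. -/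
theorem piece {c cb w t0 a b N M U am rm ρ0 ρ1 σ0 σ1 : ℝ} {W V G : ℝ → ℂ} {q0 q1 u0 u1 : ℂ}
    (ha : t0 ≤ a) (hb : b ≤ t0 + 1 / 16)
    (hW : ∀ s ∈ Set.Icc a b, HasDerivAt W (V s) s)
    (hV : ∀ s ∈ Set.Icc a b, HasDerivAt V ((Complex.I * (s:ℂ) + (c:ℂ)) * W s) s)
    (hG : ∀ s ∈ Set.Icc a b, HasDerivAt G (W s) s)
    (hc : |c - cb| ≤ w)
    (hR0 : ‖Complex.I * (t0 : ℂ) + (cb : ℂ) - q0 ^ 2 - 16 * (q1 - q0)‖ ≤ N)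
    (hR1 : ‖Complex.I * ((t0 + 1 / 16 : ℝ) : ℂ) + (cb : ℂ) - q1 ^ 2 - 16 * (q1 - q0)‖ ≤ N)
    (hQ0 : ‖1 - q0 * u0 - 16 * (u1 - u0)‖ ≤ M)
    (hQ1 : ‖1 - q1 * u1 - 16 * (u1 - u0)‖ ≤ M)
    (hU0 : ‖u0‖ ≤ U) (hU1 : ‖u1‖ ≤ U)
    (ham0 : am ≤ q0.re) (ham1 : am ≤ q1.re)
    (hr0 : 0 < ρ0) (hr1 : 0 < ρ1) (hs0 : 0 < σ0) (hs1 : 0 < σ1)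
    (hm0 : ρ0 ≤ rm) (hm1 : ρ1 ≤ rm)
    (k0 : N + ‖q1 - q0‖ ^ 2 / 4 + w ≤ 16 * (ρ1 - ρ0) + 2 * am * ρ0 - ρ0 ^ 2)
    (k1 : N + ‖q1 - q0‖ ^ 2 / 4 + w ≤ 16 * (ρ1 - ρ0) + 2 * am * ρ1 - ρ1 ^ 2)
    (l0 : M + ‖q1 - q0‖ * ‖u1 - u0‖ / 4 + U * rm ≤ 16 * (σ1 - σ0) + (am - rm) * σ0)
    (l1 : M + ‖q1 - q0‖ * ‖u1 - u0‖ / 4 + U * rm ≤ 16 * (σ1 - σ0) + (am - rm) * σ1)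
    (hX0 : ‖V a - lin t0 q0 q1 a * W a‖ ≤ rlin t0 ρ0 ρ1 a * ‖W a‖)
    (hY0 : ‖G a - lin t0 u0 u1 a * W a‖ ≤ rlin t0 σ0 σ1 a * ‖W a‖) :
    ∀ s ∈ Set.Icc a b, ‖V s - lin t0 q0 q1 s * W s‖ ≤ rlin t0 ρ0 ρ1 s * ‖W s‖ ∧
      ‖G s - lin t0 u0 u1 s * W s‖ ≤ rlin t0 σ0 σ1 s * ‖W s‖ := by
  have hτ : ∀ s ∈ Set.Icc a b, 0 ≤ 16 * (s - t0) ∧ 16 * (s - t0) ≤ 1 := by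
    intro s hs
    have := hs.1; have := hs.2
    constructor <;> linarith
  have hρp : ∀ s ∈ Set.Icc a b, 0 < rlin t0 ρ0 ρ1 s := by
    intro s hs
    obtain ⟨h0, h1⟩ := hτ s hs
    unfold rlin
    rcases h0.eq_or_lt with h | h
    · rw [← h]; linarith
    · nlinarith [mul_nonneg (sub_nonneg.2 h1) hr0.le, mul_pos h hr1]
  have hσp : ∀ s ∈ Set.Icc a b, 0 < rlin t0 σ0 σ1 s := by
    intro s hs
    obtain ⟨h0, h1⟩ := hτ s hs
    unfold rlin
    rcases h0.eq_or_lt with h | h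
    · rw [← h]; linarith
    · nlinarith [mul_nonneg (sub_nonneg.2 h1) hs0.le, mul_pos h hs1]
  refine tube (dq := fun _ => 16 * (q1 - q0)) (du := fun _ => 16 * (u1 - u0))
    (dρ := fun _ => 16 * (ρ1 - ρ0)) (dσ := fun _ => 16 * (σ1 - σ0)) hW hV hG
    (fun s _ => hasDerivAt_lin _ _ _ _) (fun s _ => hasDerivAt_lin _ _ _ _)
    (fun s _ => hasDerivAt_rlin _ _ _ _) (fun s _ => hasDerivAt_rlin _ _ _ _)
    hρp hσp continuousOn_const continuousOn_const ?_ ?_ hX0 hY0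
  · intro s hs
    obtain ⟨h0, h1⟩ := hτ s hs
    set τ := 16 * (s - t0) with hτd
    have hs' : s = t0 + τ / 16 := by rw [hτd]; ring
    have e : Complex.I * (s:ℂ) + (c:ℂ) - lin t0 q0 q1 s ^ 2 - 16 * (q1 - q0)
        = (((1 - τ : ℝ) : ℂ) * (Complex.I * (t0 : ℂ) + (cb : ℂ) - q0 ^ 2 - 16 * (q1 - q0))
          + (τ : ℂ) * (Complex.I * ((t0 + 1 / 16 : ℝ) : ℂ) + (cb : ℂ) - q1 ^ 2 - 16 * (q1 - q0)))
          + ((τ * (1 - τ) : ℝ) : ℂ) * ((q1 - q0) * (q1 - q0)) + ((c - cb : ℝ) : ℂ) := by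
      unfold lin
      rw [← hτd, hs']
      push_cast
      ring
    rw [e]
    have n1 := conv_norm h0 h1 hR0 hR1
    have n2 := tau_norm h0 h1 (q1 - q0) (q1 - q0)
    have n3 : ‖((c - cb : ℝ) : ℂ)‖ ≤ w := by rwa [Complex.norm_real]
    have n4 := norm_add₃_le (a := (((1 - τ : ℝ) : ℂ) * (Complex.I * (t0 : ℂ) + (cb : ℂ) - q0 ^ 2 - 16 * (q1 - q0))
          + (τ : ℂ) * (Complex.I * ((t0 + 1 / 16 : ℝ) : ℂ) + (cb : ℂ) - q1 ^ 2 - 16 * (q1 - q0))))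
          (b := ((τ * (1 - τ) : ℝ) : ℂ) * ((q1 - q0) * (q1 - q0))) (c := ((c - cb : ℝ) : ℂ))
    refine n4.trans ?_
    have hre : am ≤ (lin t0 q0 q1 s).re := by
      unfold lin
      rw [← hτd, Complex.add_re, Complex.re_ofReal_mul, Complex.sub_re]
      nlinarith
    have hρs := hρp s hs
    have hq : 2 * am * rlin t0 ρ0 ρ1 s ≤ 2 * (lin t0 q0 q1 s).re * rlin t0 ρ0 ρ1 s := by nlinarith
    have hcv : N + ‖q1 - q0‖ ^ 2 / 4 + w ≤ 16 * (ρ1 - ρ0) + 2 * am * rlin t0 ρ0 ρ1 s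
        - rlin t0 ρ0 ρ1 s ^ 2 := by
      have e2 : 16 * (ρ1 - ρ0) + 2 * am * rlin t0 ρ0 ρ1 s - rlin t0 ρ0 ρ1 s ^ 2
        = (1 - τ) * (16 * (ρ1 - ρ0) + 2 * am * ρ0 - ρ0 ^ 2) + τ * (16 * (ρ1 - ρ0) + 2 * am * ρ1 - ρ1 ^ 2)
          + τ * (1 - τ) * (ρ1 - ρ0) ^ 2 := by
        unfold rlin; rw [← hτd]; ring
      rw [e2]
      have := mul_le_mul_of_nonneg_left k0 (sub_nonneg.2 h1)
      have := mul_le_mul_of_nonneg_left k1 h0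
      have : 0 ≤ τ * (1 - τ) * (ρ1 - ρ0) ^ 2 :=
        mul_nonneg (mul_nonneg h0 (sub_nonneg.2 h1)) (sq_nonneg _)
      linarith
    have : ‖q1 - q0‖ * ‖q1 - q0‖ / 4 = ‖q1 - q0‖ ^ 2 / 4 := by ring
    linarith
  · intro s hs
    obtain ⟨h0, h1⟩ := hτ s hs
    set τ := 16 * (s - t0) with hτd
    have hs' : s = t0 + τ / 16 := by rw [hτd]; ring
    have e : 1 - 16 * (u1 - u0) - lin t0 q0 q1 s * lin t0 u0 u1 s
        = (((1 - τ : ℝ) : ℂ) * (1 - q0 * u0 - 16 * (u1 - u0))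
          + (τ : ℂ) * (1 - q1 * u1 - 16 * (u1 - u0)))
          + ((τ * (1 - τ) : ℝ) : ℂ) * ((q1 - q0) * (u1 - u0)) := by
      unfold lin
      rw [← hτd]
      push_cast
      ring
    rw [e]
    have n1 := conv_norm h0 h1 hQ0 hQ1
    have n2 := tau_norm h0 h1 (q1 - q0) (u1 - u0)
    have n4 := norm_add_le (((1 - τ : ℝ) : ℂ) * (1 - q0 * u0 - 16 * (u1 - u0))
          + (τ : ℂ) * (1 - q1 * u1 - 16 * (u1 - u0))) (((τ * (1 - τ) : ℝ) : ℂ) * ((q1 - q0) * (u1 - u0)))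
    have hre : am ≤ (lin t0 q0 q1 s).re := by
      unfold lin
      rw [← hτd, Complex.add_re, Complex.re_ofReal_mul, Complex.sub_re]
      nlinarith
    have hu : ‖lin t0 u0 u1 s‖ ≤ U := by
      have : lin t0 u0 u1 s = ((1 - τ : ℝ) : ℂ) * u0 + (τ : ℂ) * u1 := by
        unfold lin; rw [← hτd]; push_cast; ring
      rw [this]; exact conv_norm h0 h1 hU0 hU1
    have hρs := hρp s hs
    have hσs := hσp s hs
    have hrm : rlin t0 ρ0 ρ1 s ≤ rm := by
      unfold rlin; rw [← hτd]; nlinarith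
    have b1 : ‖lin t0 u0 u1 s‖ * rlin t0 ρ0 ρ1 s ≤ U * rm :=
      mul_le_mul hu hrm hρs.le ((norm_nonneg _).trans hu)
    have b2 : (am - rm) * rlin t0 σ0 σ1 s ≤ ((lin t0 q0 q1 s).re - rlin t0 ρ0 ρ1 s) * rlin t0 σ0 σ1 s :=
      mul_le_mul_of_nonneg_right (by linarith) hσs.le
    have hcv : M + ‖q1 - q0‖ * ‖u1 - u0‖ / 4 + U * rm
        ≤ 16 * (σ1 - σ0) + (am - rm) * rlin t0 σ0 σ1 s := by
      have e2 : 16 * (σ1 - σ0) + (am - rm) * rlin t0 σ0 σ1 s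
        = (1 - τ) * (16 * (σ1 - σ0) + (am - rm) * σ0) + τ * (16 * (σ1 - σ0) + (am - rm) * σ1) := by
        unfold rlin; rw [← hτd]; ring
      rw [e2]
      have := mul_le_mul_of_nonneg_left l0 (sub_nonneg.2 h1)
      have := mul_le_mul_of_nonneg_left l1 h0
      linarith
    linarith

/-- The good conclusion at one point. -/
def Good (s : ℝ) (W G : ℂ) : Prop :=
  0.2 * ‖G‖ ^ 2 ≤ (W * (starRingEnd ℂ) G).re ∧ ‖W‖ * ‖G‖ ≤ 500 * (W * (starRingEnd ℂ) G).re ∧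
    ‖W‖ ≤ 100 * Real.sqrt (1 + |s|) * ‖G‖

theorem re_lower {W G u : ℂ} {σ : ℝ} (h : ‖G - u * W‖ ≤ σ * ‖W‖) :
    (u.re - σ) * ‖W‖ ^ 2 ≤ (W * (starRingEnd ℂ) G).re := by
  have e : (W * (starRingEnd ℂ) G).re = u.re * ‖W‖ ^ 2 + ((G - u * W) * (starRingEnd ℂ) W).re := by
    rw [Complex.sq_norm, Complex.normSq_apply]
    simp
    ring
  have := re_mul_conj_ge (G - u * W) W
  nlinarith [norm_nonneg W]

theorem good_mid {s : ℝ} {W G u : ℂ} {σ : ℝ} (h : ‖G - u * W‖ ≤ σ * ‖W‖)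
    (h1 : ‖u - 2.5‖ + σ ≤ 2.5) (h2 : 0.01 ≤ u.re - σ) : Good s W G := by
  have hw := norm_nonneg W
  have hg := norm_nonneg G
  have a0 := re_lower h
  have a1 : 0.01 * ‖W‖ ^ 2 ≤ (W * (starRingEnd ℂ) G).re := by nlinarith [sq_nonneg ‖W‖]
  have a2 : ‖G - 2.5 * W‖ ≤ 2.5 * ‖W‖ := by
    have : G - 2.5 * W = (G - u * W) + (u - 2.5) * W := by ring
    rw [this]
    refine (norm_add_le _ _).trans ?_
    rw [norm_mul]
    nlinarith
  have a3 : ‖G‖ ≤ 5 * ‖W‖ := by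
    have : G = (G - 2.5 * W) + 2.5 * W := by ring
    rw [this]
    refine (norm_add_le _ _).trans ?_
    rw [norm_mul]
    norm_num at a2 ⊢
    linarith
  have a4 : 0.2 * ‖G‖ ^ 2 ≤ (W * (starRingEnd ℂ) G).re := by
    have b1 := pow_le_pow_left₀ (norm_nonneg _) a2 2
    have e : ‖G - 2.5 * W‖ ^ 2 = ‖G‖ ^ 2 - 5 * (W * (starRingEnd ℂ) G).re + 6.25 * ‖W‖ ^ 2 := by
      rw [Complex.sq_norm, Complex.sq_norm, Complex.sq_norm, Complex.normSq_apply,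
        Complex.normSq_apply, Complex.normSq_apply]
      have e1 : (2.5 * W).re = 2.5 * W.re := by
        rw [show (2.5 : ℂ) = ((2.5 : ℝ) : ℂ) by norm_num, Complex.re_ofReal_mul]
      have e2 : (2.5 * W).im = 2.5 * W.im := by
        rw [show (2.5 : ℂ) = ((2.5 : ℝ) : ℂ) by norm_num, Complex.im_ofReal_mul]
      rw [Complex.sub_re, Complex.sub_im, e1, e2]
      simp
      ring
    rw [e] at b1
    nlinarith
  have a5 := re_mul_conj_le W G
  refine ⟨a4, by nlinarith, ?_⟩
  have a6 : ‖W‖ ≤ 100 * ‖G‖ := by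
    rcases hw.eq_or_lt with h | h
    · rw [← h]; positivity
    · have : 0.01 * ‖W‖ * ‖W‖ ≤ ‖G‖ * ‖W‖ := by nlinarith
      have := le_of_mul_le_mul_right this h
      linarith
  have a7 : 1 ≤ Real.sqrt (1 + |s|) := by
    rw [Real.one_le_sqrt]; linarith [abs_nonneg s]
  nlinarith

theorem good_out {s x : ℝ} {W G u : ℂ} (hx : 1 ≤ x) (hxs : x ≤ Real.sqrt (1 + |s|))
    (h : ‖G - u * W‖ ≤ 0.28 / x * ‖W‖)
    (h1 : ‖u‖ ≤ 0.7072 / x) (h2 : u.re = 0.5 / x) : Good s W G := by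
  have hw := norm_nonneg W
  have hg := norm_nonneg G
  have a0 := re_lower h
  set z := 1 / x with hz
  have hz1 : z ≤ 1 := by rw [hz, div_le_one (by linarith)]; exact hx
  have hz0 : 0 < z := by positivity
  have hxz : x * z = 1 := by rw [hz]; field_simp
  rw [show 0.28 / x = 0.28 * z by rw [hz]; ring] at h a0
  rw [show 0.5 / x = 0.5 * z by rw [hz]; ring] at h2
  rw [show 0.7072 / x = 0.7072 * z by rw [hz]; ring] at h1
  rw [h2] at a0
  have a1 : 0.22 * (z * ‖W‖ ^ 2) ≤ (W * (starRingEnd ℂ) G).re := by nlinarith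
  have a3 : ‖G‖ ≤ 0.9872 * (z * ‖W‖) := by
    have : G = (G - u * W) + u * W := by ring
    rw [this]
    refine (norm_add_le _ _).trans ?_
    rw [norm_mul]
    nlinarith
  have a5 := re_mul_conj_le W G
  have hzz : z ^ 2 * ‖W‖ ^ 2 ≤ z * ‖W‖ ^ 2 := by
    apply mul_le_mul_of_nonneg_right _ (sq_nonneg _)
    nlinarith
  refine ⟨?_, ?_, ?_⟩
  · have := pow_le_pow_left₀ hg a3 2
    nlinarith
  · have : ‖W‖ * ‖G‖ ≤ ‖W‖ * (0.9872 * (z * ‖W‖)) := mul_le_mul_of_nonneg_left a3 hw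
    nlinarith [mul_nonneg hz0.le (sq_nonneg ‖W‖)]
  · have a6 : 0.22 * ‖W‖ ≤ x * ‖G‖ := by
      rcases hw.eq_or_lt with h | h
      · rw [← h]; simp; positivity
      · have : 0.22 * (z * ‖W‖) * ‖W‖ ≤ ‖G‖ * ‖W‖ := by nlinarith
        have := le_of_mul_le_mul_right this h
        have := mul_le_mul_of_nonneg_left this (by linarith : 0 ≤ x)
        have e : x * (0.22 * (z * ‖W‖)) = 0.22 * ‖W‖ := by linear_combination 0.22 * ‖W‖ * hxz
        linarith
    nlinarith

end OS


namespace OS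

theorem norm_of_int {z : ℂ} {X Y N : ℤ} (e : ℝ) (he : 0 ≤ e) (hX : z.re = X * e) (hY : z.im = Y * e)
    (hN : 0 ≤ N) (h : nsq X Y ≤ N * N) : ‖z‖ ≤ N * e := by
  have hN' : (0:ℝ) ≤ N := by exact_mod_cast hN
  apply norm_le_of_nsq (by positivity)
  have h' : ((nsq X Y : ℤ) : ℝ) ≤ ((N * N : ℤ) : ℝ) := by exact_mod_cast h
  unfold nsq at h'
  push_cast at h'
  rw [hX, hY]
  nlinarith [mul_nonneg he he]

theorem normsq_of_int {z : ℂ} {X Y : ℤ} (e : ℝ) (hX : z.re = X * e) (hY : z.im = Y * e) :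
    ‖z‖ ^ 2 = (nsq X Y : ℤ) * e ^ 2 := by
  rw [Complex.sq_norm, Complex.normSq_apply, hX, hY]
  unfold nsq
  push_cast
  ring

noncomputable def eD : ℝ := 1 / 16384
noncomputable def qS (s : St) : ℂ := ⟨s.x * eD, s.y * eD⟩
noncomputable def uS (s : St) : ℂ := ⟨s.a * eD, s.b * eD⟩
noncomputable def rS (s : St) : ℝ := s.r * eD
noncomputable def gS (s : St) : ℝ := s.g * eD
noncomputable def nd (n : ℕ) : ℝ := ((n : ℝ) - 96) / 16

theorem nd_succ (n : ℕ) : nd (n + 1) = nd n + 1 / 16 := by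
  unfold nd; push_cast; ring

/-- solution triple on an interval -/
structure Trip (c a b : ℝ) (W V G : ℝ → ℂ) : Prop where
  hW : ∀ s ∈ Set.Icc a b, HasDerivAt W (V s) s
  hV : ∀ s ∈ Set.Icc a b, HasDerivAt V ((Complex.I * (s:ℂ) + (c:ℂ)) * W s) s
  hG : ∀ s ∈ Set.Icc a b, HasDerivAt G (W s) s

theorem Trip.mono {c a b a' b' : ℝ} {W V G : ℝ → ℂ} (h : Trip c a b W V G) (ha : a ≤ a') (hb : b' ≤ b) :
    Trip c a' b' W V G :=
  ⟨fun s hs => h.hW s ⟨ha.trans hs.1, hs.2.trans hb⟩, fun s hs => h.hV s ⟨ha.trans hs.1, hs.2.trans hb⟩,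
    fun s hs => h.hG s ⟨ha.trans hs.1, hs.2.trans hb⟩⟩

def InTube (q u : ℂ) (ρ σ : ℝ) (W V G : ℂ) : Prop :=
  ‖V - q * W‖ ≤ ρ * ‖W‖ ∧ ‖G - u * W‖ ≤ σ * ‖W‖

def PTube (n : ℕ) (s t : St) (z : ℝ) (W V G : ℂ) : Prop :=
  InTube (lin (nd n) (qS s) (qS t) z) (lin (nd n) (uS s) (uS t) z)
    (rlin (nd n) (rS s) (rS t) z) (rlin (nd n) (gS s) (gS t) z) W V G

set_option maxHeartbeats 1600000 in
theorem chk_piece {C w N M U : ℤ} {n : ℕ} {s t : St} {c a b : ℝ} {W V G : ℝ → ℂ}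
    (h : chk C w n s t N M U = true) (hs : nodeChk s = true) (ht : nodeChk t = true)
    (hc : |c - C * eD| ≤ w * eD) (ha : nd n ≤ a) (hb : b ≤ nd (n + 1)) (hT : Trip c a b W V G)
    (h0 : PTube n s t a (W a) (V a) (G a)) :
    ∀ z ∈ Set.Icc a b, PTube n s t z (W z) (V z) (G z) := by
  simp only [chk, nodeChk, Bool.and_eq_true, decide_eq_true_eq] at h hs ht
  obtain ⟨⟨⟨⟨⟨⟨⟨⟨⟨⟨⟨⟨hN, hM⟩, hU⟩, hR0⟩, hR1⟩, hQ0⟩, hQ1⟩, hU0⟩, hU1⟩, k0⟩, k1⟩, l0⟩, l1⟩ := h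
  have he : 0 < eD := by unfold eD; norm_num
  have hee : eD * 16384 = 1 := by unfold eD; norm_num
  have hsl : ∀ m : ℕ, ((sl m : ℤ) : ℝ) * eD = nd m := by
    intro m; unfold sl nd eD; push_cast; ring
  have E : (16384 : ℝ) = 1 / eD := by unfold eD; norm_num
  have dq : ‖qS t - qS s‖ ^ 2 = (dq2 s t : ℤ) * eD ^ 2 :=
    normsq_of_int eD (by simp [qS]; ring) (by simp [qS]; ring)
  have du : ‖uS t - uS s‖ ^ 2 = (du2 s t : ℤ) * eD ^ 2 :=
    normsq_of_int eD (by simp [uS]; ring) (by simp [uS]; ring)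
  have dd : ‖qS t - qS s‖ * ‖uS t - uS s‖ ≤ ((dq2 s t : ℤ) + (du2 s t : ℤ)) * eD ^ 2 / 2 := by
    nlinarith [sq_nonneg (‖qS t - qS s‖ - ‖uS t - uS s‖)]
  have hi16re : ∀ z : ℂ, (16 * z).re = 16 * z.re := fun z => by
    rw [show (16 : ℂ) = ((16 : ℝ) : ℂ) by norm_num, Complex.re_ofReal_mul]
  have hi16im : ∀ z : ℂ, (16 * z).im = 16 * z.im := fun z => by
    rw [show (16 : ℂ) = ((16 : ℝ) : ℂ) by norm_num, Complex.im_ofReal_mul]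
  have k0' : ((4 * N + dq2 s t + 65536 * w : ℤ) : ℝ) ≤ ((4 * (262144 * (t.r - s.r) + 2 * (min s.x t.x) * s.r - s.r * s.r) : ℤ) : ℝ) := by
    exact_mod_cast k0
  have k1' : ((4 * N + dq2 s t + 65536 * w : ℤ) : ℝ) ≤ ((4 * (262144 * (t.r - s.r) + 2 * (min s.x t.x) * t.r - t.r * t.r) : ℤ) : ℝ) := by
    exact_mod_cast k1
  have l0' : ((8 * M + dq2 s t + du2 s t + 8 * (U * max s.r t.r) : ℤ) : ℝ) ≤
    ((8 * (262144 * (t.g - s.g) + (min s.x t.x - max s.r t.r) * s.g) : ℤ) : ℝ) := by exact_mod_cast l0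
  have l1' : ((8 * M + dq2 s t + du2 s t + 8 * (U * max s.r t.r) : ℤ) : ℝ) ≤
    ((8 * (262144 * (t.g - s.g) + (min s.x t.x - max s.r t.r) * t.g) : ℤ) : ℝ) := by exact_mod_cast l1
  have mn0 : min s.x t.x ≤ s.x := min_le_left _ _
  have mn1 : min s.x t.x ≤ t.x := min_le_right _ _
  have mx0 : s.r ≤ max s.r t.r := le_max_left _ _
  have mx1 : t.r ≤ max s.r t.r := le_max_right _ _
  generalize min s.x t.x = am at *
  generalize max s.r t.r = rm at *
  have hbb : b ≤ nd n + 1 / 16 := by rw [← nd_succ]; exact hb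
  push_cast at k0' k1' l0' l1'
  have pe2 : 0 < eD ^ 2 := by positivity
  refine piece (cb := C * eD) (w := w * eD) (N := N * eD ^ 2) (M := M * eD ^ 2) (U := U * eD)
    (am := am * eD) (rm := rm * eD) ha hbb hT.hW hT.hV hT.hG hc ?_ ?_ ?_ ?_ ?_ ?_ ?_ ?_ ?_ ?_ ?_ ?_ ?_ ?_
    ?_ ?_ ?_ ?_ h0.1 h0.2
  · refine norm_of_int (eD ^ 2) (by positivity) ?_ ?_ hN hR0
    · rw [Complex.sub_re, Complex.sub_re, hi16re]
      simp only [qS, R0x, pow_two]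
      simp
      linear_combination (16 * (t.x - s.x) * eD - C * eD) * hee
    · rw [Complex.sub_im, Complex.sub_im, hi16im, ← hsl]
      simp only [qS, R0y, pow_two]
      simp
      linear_combination (16 * (t.y - s.y) * eD - sl n * eD) * hee
  · refine norm_of_int (eD ^ 2) (by positivity) ?_ ?_ hN hR1
    · rw [Complex.sub_re, Complex.sub_re, hi16re]
      simp only [qS, R1x, pow_two]
      simp
      linear_combination (16 * (t.x - s.x) * eD - C * eD) * hee
    · rw [Complex.sub_im, Complex.sub_im, hi16im, ← nd_succ, ← hsl]
      simp only [qS, R1y, pow_two]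
      simp
      linear_combination (16 * (t.y - s.y) * eD - sl (n + 1) * eD) * hee
  · refine norm_of_int (eD ^ 2) (by positivity) ?_ ?_ hM hQ0
    · rw [Complex.sub_re, Complex.sub_re, hi16re]
      simp only [qS, uS, Q0x]
      simp
      linear_combination (16 * (t.a - s.a) * eD - 1 - 16384 * eD) * hee
    · rw [Complex.sub_im, Complex.sub_im, hi16im]
      simp only [qS, uS, Q0y]
      simp
      linear_combination (16 * (t.b - s.b) * eD) * hee
  · refine norm_of_int (eD ^ 2) (by positivity) ?_ ?_ hM hQ1
    · rw [Complex.sub_re, Complex.sub_re, hi16re]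
      simp only [qS, uS, Q1x]
      simp
      linear_combination (16 * (t.a - s.a) * eD - 1 - 16384 * eD) * hee
    · rw [Complex.sub_im, Complex.sub_im, hi16im]
      simp only [qS, uS, Q1y]
      simp
      linear_combination (16 * (t.b - s.b) * eD) * hee
  · exact norm_of_int eD he.le rfl rfl hU hU0
  · exact norm_of_int eD he.le rfl rfl hU hU1
  · exact mul_le_mul_of_nonneg_right (by exact_mod_cast mn0) he.le
  · exact mul_le_mul_of_nonneg_right (by exact_mod_cast mn1) he.le
  · exact mul_pos (by exact_mod_cast hs.1.1.1.1) he
  · exact mul_pos (by exact_mod_cast ht.1.1.1.1) he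
  · exact mul_pos (by exact_mod_cast hs.1.1.1.2) he
  · exact mul_pos (by exact_mod_cast ht.1.1.1.2) he
  · exact mul_le_mul_of_nonneg_right (by exact_mod_cast mx0) he.le
  · exact mul_le_mul_of_nonneg_right (by exact_mod_cast mx1) he.le
  · rw [dq]
    unfold rS
    have := mul_le_mul_of_nonneg_right k0' pe2.le
    linear_combination this / 4 + (16 * (t.r - s.r) * eD - w * eD) * hee
  · rw [dq]
    unfold rS
    have := mul_le_mul_of_nonneg_right k1' pe2.le
    linear_combination this / 4 + (16 * (t.r - s.r) * eD - w * eD) * hee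
  · unfold gS
    have := mul_le_mul_of_nonneg_right l0' pe2.le
    linear_combination this / 8 + dd / 4 + (16 * (t.g - s.g) * eD) * hee
  · unfold gS
    have := mul_le_mul_of_nonneg_right l1' pe2.le
    linear_combination this / 8 + dd / 4 + (16 * (t.g - s.g) * eD) * hee

theorem ptube_good {n : ℕ} {s t : St} {z : ℝ} {W V G : ℂ}
    (hs : nodeChk s = true) (ht : nodeChk t = true) (h0 : nd n ≤ z) (h1 : z ≤ nd (n + 1))
    (h : PTube n s t z W V G) : Good z W G := by
  have he : 0 < eD := by unfold eD; norm_num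
  have hee : eD * 16384 = 1 := by unfold eD; norm_num
  have key : ∀ r : St, nodeChk r = true → ‖uS r - 2.5‖ + gS r ≤ 2.5 ∧ 0.01 ≤ (uS r).re - gS r := by
    intro r hr
    simp only [nodeChk, Bool.and_eq_true, decide_eq_true_eq] at hr
    obtain ⟨⟨⟨⟨r1, r2⟩, r3⟩, r4⟩, r5⟩ := hr
    have e5 : (2.5:ℂ) = ((2.5 : ℝ) : ℂ) := by norm_num
    have := norm_of_int (z := uS r - 2.5) eD he.le (X := r.a - 40960) (Y := r.b)
      (by rw [Complex.sub_re, e5, Complex.ofReal_re]; simp only [uS]; push_cast; linear_combination 2.5 * hee)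
      (by rw [Complex.sub_im, e5, Complex.ofReal_im]; simp only [uS]; push_cast; ring)
      (N := 40960 - r.g) (by linarith) r4
    constructor
    · unfold gS
      push_cast at this
      linear_combination this + 2.5 * hee
    · unfold gS
      have h5 : (164:ℝ) ≤ r.a - r.g := by exact_mod_cast r5
      simp only [uS]
      nlinarith
  obtain ⟨s1, s2⟩ := key s hs
  obtain ⟨t1, t2⟩ := key t ht
  rw [nd_succ] at h1
  set τ := 16 * (z - nd n) with hτ
  have hτ0 : 0 ≤ τ := by linarith
  have hτ1 : τ ≤ 1 := by linarith
  refine good_mid h.2 ?_ ?_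
  · have e : lin (nd n) (uS s) (uS t) z - 2.5 = ((1 - τ : ℝ) : ℂ) * (uS s - 2.5) + (τ : ℂ) * (uS t - 2.5) := by
      unfold lin; rw [← hτ]; push_cast; ring
    rw [e]
    have : ‖((1 - τ : ℝ) : ℂ) * (uS s - 2.5) + (τ : ℂ) * (uS t - 2.5)‖ ≤ (1 - τ) * ‖uS s - 2.5‖ + τ * ‖uS t - 2.5‖ := by
      refine (norm_add_le _ _).trans ?_
      rw [norm_mul, norm_mul, Complex.norm_real, Complex.norm_real, Real.norm_of_nonneg hτ0,
        Real.norm_of_nonneg (by linarith)]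
    unfold rlin; rw [← hτ]
    nlinarith
  · unfold rlin lin; rw [← hτ, Complex.add_re, Complex.re_ofReal_mul, Complex.sub_re]
    nlinarith

end OS


namespace OS

noncomputable def xo (e s : ℝ) : ℝ := Real.sqrt (e * s / 2)
noncomputable def qo (e s : ℝ) : ℂ := (xo e s : ℂ) * (1 + (e : ℂ) * Complex.I)
noncomputable def uo (e s : ℝ) : ℂ := ((1 / (2 * xo e s) : ℝ) : ℂ) * (1 - (e : ℂ) * Complex.I)

def OTube (e z : ℝ) (W V G : ℂ) : Prop :=
  InTube (qo e z) (uo e z) 0.4 (0.28 / xo e z) W V G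

theorem norm_one_pm {e : ℝ} (he : e ^ 2 = 1) :
    ‖1 + (e : ℂ) * Complex.I‖ ≤ 1.41422 ∧ ‖1 - (e : ℂ) * Complex.I‖ ≤ 1.41422 := by
  constructor
  · apply norm_le_of_nsq (by norm_num)
    simp
    norm_num
    nlinarith
  · apply norm_le_of_nsq (by norm_num)
    simp
    norm_num
    nlinarith

theorem xo_ge {e s : ℝ} (h : 6 ≤ e * s) : 1.73205 ≤ xo e s ∧ xo e s ^ 2 = e * s / 2 := by
  constructor
  · unfold xo
    apply Real.le_sqrt_of_sq_le
    norm_num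
    linarith
  · unfold xo
    rw [Real.sq_sqrt]; linarith

theorem hasDerivAt_xo {e s : ℝ} (h : 6 ≤ e * s) : HasDerivAt (xo e) (e / (4 * xo e s)) s := by
  have h1 : HasDerivAt (fun s : ℝ => e * s / 2) (e * 1 / 2) s :=
    ((hasDerivAt_id s).const_mul e).div_const 2
  have h2 := h1.sqrt (by linarith : e * s / 2 ≠ 0)
  refine h2.congr_deriv ?_
  unfold xo
  ring

set_option maxHeartbeats 1600000 in
theorem outer {c e a b : ℝ} {W V G : ℝ → ℂ} (hc0 : -0.02 ≤ c) (hc1 : c ≤ 1) (he : e ^ 2 = 1)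
    (hab : ∀ s ∈ Set.Icc a b, 6 ≤ e * s) (hT : Trip c a b W V G)
    (h0 : OTube e a (W a) (V a) (G a)) :
    ∀ z ∈ Set.Icc a b, OTube e z (W z) (V z) (G z) := by
  have hen : |e| = 1 := by
    rcases mul_self_eq_one_iff.1 ((sq e).symm.trans he) with h | h <;> simp [h]
  have hx : ∀ s ∈ Set.Icc a b, 0 < xo e s := fun s hs => by
    have := (xo_ge (hab s hs)).1; linarith
  have hσd : ∀ s ∈ Set.Icc a b, HasDerivAt (fun s => 0.28 / xo e s) (-(0.07 * e / xo e s ^ 3)) s := by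
    intro s hs
    have h1 := (hasDerivAt_const s (0.28:ℝ)).div (hasDerivAt_xo (hab s hs)) (hx s hs).ne'
    refine h1.congr_deriv ?_
    have := (hx s hs).ne'
    field_simp
    ring
  have cx : ContinuousOn (xo e) (Set.Icc a b) := fun s hs =>
    (hasDerivAt_xo (hab s hs)).continuousAt.continuousWithinAt
  refine tube (dq := fun s => ((e / (4 * xo e s) : ℝ) : ℂ) * (1 + (e : ℂ) * Complex.I))
    (du := fun s => ((-(e / (8 * xo e s ^ 3)) : ℝ) : ℂ) * (1 - (e : ℂ) * Complex.I))
    (dρ := fun _ => 0) (dσ := fun s => -(0.07 * e / xo e s ^ 3)) (ρ := fun _ => 0.4)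
    hT.hW hT.hV hT.hG ?_ ?_ (fun s _ => hasDerivAt_const _ _) hσd (fun _ _ => by norm_num)
    (fun s hs => div_pos (by norm_num) (hx s hs)) continuousOn_const ?_ ?_ ?_ h0.1 h0.2
  · intro s hs
    exact ((hasDerivAt_xo (hab s hs)).ofReal_comp).mul_const _
  · intro s hs
    have h1 := (hasDerivAt_const s (1:ℝ)).div ((hasDerivAt_xo (hab s hs)).const_mul 2)
      (by have := hx s hs; positivity)
    have h2 : HasDerivAt (fun s => 1 / (2 * xo e s)) (-(e / (8 * xo e s ^ 3))) s := by
      refine h1.congr_deriv ?_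
      have := (hx s hs).ne'
      field_simp
      ring
    exact (h2.ofReal_comp).mul_const _
  · refine ContinuousOn.neg (ContinuousOn.div continuousOn_const (cx.pow 3) ?_)
    intro s hs
    have := hx s hs
    positivity
  · intro s hs
    obtain ⟨x1, x2⟩ := xo_ge (hab s hs)
    have hxp := hx s hs
    set x := xo e s with hxd
    have hre : (qo e s).re = x := by simp [qo, ← hxd]
    have e1 : Complex.I * (s:ℂ) + (c:ℂ) - qo e s ^ 2 - ((e / (4 * x) : ℝ) : ℂ) * (1 + (e : ℂ) * Complex.I)
        = (c : ℂ) - ((e / (4 * x) : ℝ) : ℂ) * (1 + (e : ℂ) * Complex.I) := by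
      have : qo e s ^ 2 = Complex.I * (s:ℂ) := by
        unfold qo
        rw [← hxd, mul_pow, ← Complex.ofReal_pow, x2]
        have hc : (e:ℂ) ^ 2 = 1 := by exact_mod_cast he
        push_cast
        linear_combination ((e:ℂ) * s / 2 * Complex.I ^ 2 + s * Complex.I) * hc + (e:ℂ) * s / 2 * Complex.I_sq
      rw [this]; ring
    rw [e1, hre]
    have n1 : ‖((e / (4 * x) : ℝ) : ℂ) * (1 + (e : ℂ) * Complex.I)‖ ≤ 1 / (4 * x) * 1.41422 := by
      rw [norm_mul, Complex.norm_real, Real.norm_eq_abs, abs_div, hen, abs_of_pos (by positivity)]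
      exact mul_le_mul_of_nonneg_left (norm_one_pm he).1 (by positivity)
    have n2 : ‖(c:ℂ)‖ ≤ 1 := by
      rw [Complex.norm_real, Real.norm_eq_abs, abs_le]; constructor <;> linarith
    have n3 : 1 / (4 * x) * 1.41422 ≤ 0.2042 := by
      rw [div_mul_eq_mul_div, div_le_iff₀ (by positivity)]; nlinarith
    have := norm_sub_le (c:ℂ) (((e / (4 * x) : ℝ) : ℂ) * (1 + (e : ℂ) * Complex.I))
    norm_num at *
    linarith
  · intro s hs
    obtain ⟨x1, x2⟩ := xo_ge (hab s hs)
    have hxp := hx s hs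
    have hre : (qo e s).re = xo e s := by simp [qo]
    have hqu : qo e s * uo e s = 1 := by
      unfold qo uo
      have hc : (e:ℂ) ^ 2 = 1 := by exact_mod_cast he
      have hxc : ((xo e s : ℝ) : ℂ) ≠ 0 := by exact_mod_cast hxp.ne'
      push_cast
      field_simp
      linear_combination - Complex.I ^ 2 * hc - Complex.I_sq
    rw [hqu, hre]
    have hu : ‖uo e s‖ ≤ 0.70711 / xo e s := by
      unfold uo
      rw [norm_mul, Complex.norm_real, Real.norm_of_nonneg (by positivity)]
      refine (mul_le_mul_of_nonneg_left (norm_one_pm he).2 (by positivity)).trans (le_of_eq ?_)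
      field_simp; norm_num
    set x := xo e s with hxd
    have e1 : 1 - ((-(e / (8 * x ^ 3)) : ℝ) : ℂ) * (1 - (e : ℂ) * Complex.I) - 1
      = ((e / (8 * x ^ 3) : ℝ) : ℂ) * (1 - (e : ℂ) * Complex.I) := by push_cast; ring
    rw [e1]
    have n1 : ‖((e / (8 * x ^ 3) : ℝ) : ℂ) * (1 - (e : ℂ) * Complex.I)‖ ≤ 1 / (8 * x ^ 3) * 1.41422 := by
      rw [norm_mul, Complex.norm_real, Real.norm_eq_abs, abs_div, hen, abs_of_pos (by positivity)]
      exact mul_le_mul_of_nonneg_left (norm_one_pm he).2 (by positivity)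
    have n2 : 0.07 * e / x ^ 3 ≤ 0.07 / x ^ 3 := by
      have : e ≤ 1 := by rw [← hen]; exact le_abs_self e
      apply div_le_div_of_nonneg_right _ (by positivity)
      linarith
    set y := 1 / x with hy
    have hy0 : 0 < y := by positivity
    have hy1 : y ≤ 0.57736 := by rw [hy, div_le_iff₀ hxp]; nlinarith
    have hy3 : y ^ 3 ≤ 0.1925 := by
      have := pow_le_pow_left₀ hy0.le hy1 3
      norm_num at this ⊢
      linarith
    have hxy : x * y = 1 := by rw [hy]; field_simp
    have f1 : 1 / (8 * x ^ 3) * 1.41422 = 0.1767775 * y ^ 3 := by rw [hy]; field_simp; norm_num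
    have f2 : 0.07 / x ^ 3 = 0.07 * y ^ 3 := by rw [hy]; field_simp
    have f3 : 0.70711 / x = 0.70711 * y := by rw [hy]; field_simp
    have f4 : 0.28 / x = 0.28 * y := by rw [hy]; field_simp
    rw [f1] at n1; rw [f2] at n2; rw [f3] at hu
    show _ ≤ -(0.07 * e / x ^ 3) + (x - 0.4) * (0.28 / x)
    rw [f4]
    have : (x - 0.4) * (0.28 * y) = 0.28 - 0.112 * y := by linear_combination 0.28 * hxy
    rw [this]
    norm_num at *
    linarith

theorem otube_good {e z : ℝ} {W V G : ℂ} (he : e ^ 2 = 1) (hz : 6 ≤ e * z)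
    (h : OTube e z W V G) : Good z W G := by
  obtain ⟨x1, x2⟩ := xo_ge hz
  have hxp : 0 < xo e z := by linarith
  refine good_out (x := xo e z) (by linarith) ?_ h.2 ?_ ?_
  · unfold xo
    apply Real.sqrt_le_sqrt
    rcases mul_self_eq_one_iff.1 ((sq e).symm.trans he) with h | h <;> subst h
    · linarith [le_abs_self z]
    · linarith [neg_abs_le z]
  · unfold uo
    rw [norm_mul, Complex.norm_real, Real.norm_of_nonneg (by positivity)]
    refine (mul_le_mul_of_nonneg_left (norm_one_pm he).2 (by positivity)).trans ?_
    rw [div_mul_eq_mul_div, div_le_div_iff₀ (by positivity) hxp]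
    nlinarith
  · simp only [uo, Complex.re_ofReal_mul]
    simp
    ring

end OS


namespace OS

theorem InTube.change {q u q' u' W V G : ℂ} {ρ σ ρ' σ' : ℝ} (h : InTube q u ρ σ W V G)
    (h1 : ‖q - q'‖ + ρ ≤ ρ') (h2 : ‖u - u'‖ + σ ≤ σ') : InTube q' u' ρ' σ' W V G := by
  have hw := norm_nonneg W
  constructor
  · have e : V - q' * W = (V - q * W) + (q - q') * W := by ring
    rw [e]
    refine (norm_add_le _ _).trans ?_
    rw [norm_mul]
    nlinarith [h.1]
  · have e : G - u' * W = (G - u * W) + (u - u') * W := by ring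
    rw [e]
    refine (norm_add_le _ _).trans ?_
    rw [norm_mul]
    nlinarith [h.2]

theorem lin_left (t : ℝ) (p q : ℂ) : lin t p q t = p := by simp [lin]
theorem rlin_left (t : ℝ) (p q : ℝ) : rlin t p q t = p := by simp [rlin]
theorem lin_right (n : ℕ) (p q : ℂ) : lin (nd n) p q (nd (n + 1)) = q := by
  rw [nd_succ]; unfold lin; push_cast; ring
theorem rlin_right (n : ℕ) (p q : ℝ) : rlin (nd n) p q (nd (n + 1)) = q := by
  rw [nd_succ]; unfold rlin; ring

theorem sqrt3_bounds : 1.73205 ≤ Real.sqrt 3 ∧ Real.sqrt 3 ≤ 1.73206 := by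
  constructor
  · apply Real.le_sqrt_of_sq_le; norm_num
  · rw [Real.sqrt_le_left (by norm_num)]; norm_num

theorem s3_inv : 0.28867 ≤ 1 / (2 * Real.sqrt 3) ∧ 1 / (2 * Real.sqrt 3) ≤ 0.28868 := by
  obtain ⟨h1, h2⟩ := sqrt3_bounds
  have : 0 < Real.sqrt 3 := by linarith
  constructor
  · rw [le_div_iff₀ (by positivity)]; nlinarith
  · rw [div_le_iff₀ (by positivity)]; nlinarith

theorem s28 : 0.1616 ≤ 0.28 / Real.sqrt 3 ∧ 0.28 / Real.sqrt 3 ≤ 0.1617 := by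
  obtain ⟨h1, h2⟩ := sqrt3_bounds
  have : 0 < Real.sqrt 3 := by linarith
  constructor
  · rw [le_div_iff₀ (by positivity)]; nlinarith
  · rw [div_le_iff₀ (by positivity)]; nlinarith

theorem small_norm {z : ℂ} {d : ℝ} (hd : 0 ≤ d) (h1 : |z.re| ≤ d) (h2 : |z.im| ≤ d) : ‖z‖ ≤ 2 * d := by
  have := Complex.norm_le_abs_re_add_abs_im z
  linarith

theorem exit_tube {s : St} {W V G : ℂ} (h : exitChk s = true)
    (hT : InTube (qS s) (uS s) (rS s) (gS s) W V G) : OTube 1 6 W V G := by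
  simp only [exitChk, Bool.and_eq_true, decide_eq_true_eq] at h
  obtain ⟨⟨⟨h1, h2⟩, h3⟩, h4⟩ := h
  have he : 0 < eD := by unfold eD; norm_num
  have hx : xo 1 6 = Real.sqrt 3 := by unfold xo; norm_num
  obtain ⟨b1, b2⟩ := sqrt3_bounds
  obtain ⟨b3, b4⟩ := s3_inv
  refine hT.change ?_ ?_
  · have n1 := norm_of_int (z := qS s - ⟨28378 * eD, 28378 * eD⟩) eD he.le (X := s.x - 28378) (Y := s.y - 28378)
      (by simp [qS]; ring) (by simp [qS]; ring) (N := 6540 - s.r) (by linarith) h3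
    have n2 : ‖(⟨28378 * eD, 28378 * eD⟩ : ℂ) - qo 1 6‖ ≤ 2 * 0.00001 := by
      apply small_norm (by norm_num)
      · rw [abs_le]; simp [qo, hx]; unfold eD; constructor <;> linarith
      · rw [abs_le]; simp [qo, hx]; unfold eD; constructor <;> linarith
    have n3 := norm_add_le (qS s - ⟨28378 * eD, 28378 * eD⟩) ((⟨28378 * eD, 28378 * eD⟩ : ℂ) - qo 1 6)
    rw [sub_add_sub_cancel] at n3
    push_cast at n1
    unfold rS
    have : 6540 * eD ≤ 0.3992 := by unfold eD; norm_num
    nlinarith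
  · have n1 := norm_of_int (z := uS s - ⟨4730 * eD, -(4730 * eD)⟩) eD he.le (X := s.a - 4730) (Y := s.b + 4730)
      (by simp [uS]; ring) (by simp [uS]; ring) (N := 2640 - s.g) (by linarith) h4
    have n2 : ‖(⟨4730 * eD, -(4730 * eD)⟩ : ℂ) - uo 1 6‖ ≤ 2 * 0.00004 := by
      apply small_norm (by norm_num)
      · have : ((⟨4730 * eD, -(4730 * eD)⟩ : ℂ) - uo 1 6).re = 4730 * eD - 1 / (2 * Real.sqrt 3) := by
          rw [Complex.sub_re, uo, Complex.re_ofReal_mul, hx]; simp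
        rw [abs_le, this]; unfold eD; constructor <;> linarith
      · have : ((⟨4730 * eD, -(4730 * eD)⟩ : ℂ) - uo 1 6).im = -(4730 * eD) + 1 / (2 * Real.sqrt 3) := by
          rw [Complex.sub_im, uo, Complex.im_ofReal_mul, hx]; simp
        rw [abs_le, this]; unfold eD; constructor <;> linarith
    have n3 := norm_add_le (uS s - ⟨4730 * eD, -(4730 * eD)⟩) ((⟨4730 * eD, -(4730 * eD)⟩ : ℂ) - uo 1 6)
    rw [sub_add_sub_cancel] at n3
    push_cast at n1
    unfold gS
    have : 2640 * eD ≤ 0.1612 := by unfold eD; norm_num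
    have := s28.1
    rw [hx]
    nlinarith

theorem init_tube {W V G : ℂ} (hT : OTube (-1) (-6) W V G) :
    InTube (qS startSt) (uS startSt) (rS startSt) (gS startSt) W V G := by
  have he : 0 < eD := by unfold eD; norm_num
  have hx : xo (-1) (-6) = Real.sqrt 3 := by unfold xo; norm_num
  obtain ⟨b1, b2⟩ := sqrt3_bounds
  obtain ⟨b3, b4⟩ := s3_inv
  refine InTube.change hT ?_ ?_
  · have n2 : ‖qo (-1) (-6) - qS startSt‖ ≤ 2 * 0.00001 := by
      apply small_norm (by norm_num)
      · rw [abs_le]; simp [qo, hx, qS, startSt]; unfold eD; constructor <;> linarith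
      · rw [abs_le]; simp [qo, hx, qS, startSt]; unfold eD; constructor <;> linarith
    have : rS startSt = 6560 / 16384 := by unfold rS eD startSt; norm_num
    rw [this]
    linarith
  · have n2 : ‖uo (-1) (-6) - uS startSt‖ ≤ 2 * 0.00004 := by
      apply small_norm (by norm_num)
      · have : (uo (-1) (-6) - uS startSt).re = 1 / (2 * Real.sqrt 3) - 4730 * eD := by
          rw [Complex.sub_re, uo, Complex.re_ofReal_mul, hx]; simp [uS, startSt]
        rw [abs_le, this]; unfold eD; constructor <;> linarith
      · have : (uo (-1) (-6) - uS startSt).im = 1 / (2 * Real.sqrt 3) - 4730 * eD := by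
          rw [Complex.sub_im, uo, Complex.im_ofReal_mul, hx]; simp [uS, startSt]
        rw [abs_le, this]; unfold eD; constructor <;> linarith
    have : gS startSt = 2785 / 16384 := by unfold gS eD startSt; norm_num
    rw [this, hx]
    have := s28.2
    linarith

theorem mid_chain {C w : ℤ} {c : ℝ} (hgo : go C w 192 0 startSt = true) (hc0 : -0.02 ≤ c) (hc1 : c ≤ 1)
    (hc : |c - C * eD| ≤ w * eD) {W V G : ℝ → ℂ} {s1 : ℝ} :
    ∀ m n : ℕ, n + m = 191 → ∀ a, nd n ≤ a → a ≤ nd (n + 1) → Trip c a s1 W V G →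
      PTube n (seq C w n) (seq C w (n + 1)) a (W a) (V a) (G a) →
      ∀ z ∈ Set.Icc a s1, Good z (W z) (G z) := by
  obtain ⟨hchk, hnode, hexit⟩ := go_sound C w 192 0 hgo
  simp only [zero_add, Nat.zero_le, true_imp_iff] at hchk hnode hexit
  have step : ∀ n, n < 192 → ∀ a, nd n ≤ a → a ≤ nd (n + 1) → Trip c a s1 W V G →
      PTube n (seq C w n) (seq C w (n + 1)) a (W a) (V a) (G a) →
      (∀ z, a ≤ z → z ≤ s1 → z ≤ nd (n + 1) → PTube n (seq C w n) (seq C w (n + 1)) z (W z) (V z) (G z)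
        ∧ Good z (W z) (G z)) := by
    intro n hn a ha hb hT h0 z hz1 hz2 hz3
    obtain ⟨N, M, U, hk⟩ := hchk n hn
    have := chk_piece hk (hnode n hn.le) (hnode (n + 1) hn) hc ha hz3 (hT.mono le_rfl hz2) h0 z
      ⟨hz1, le_rfl⟩
    exact ⟨this, ptube_good (hnode n hn.le) (hnode (n + 1) hn) (ha.trans hz1) hz3 this⟩
  intro m
  induction m with
  | zero =>
    intro n hn a ha hb hT h0 z hz
    have hn' : n = 191 := by omega
    subst hn'
    rcases le_total z (nd (191 + 1)) with h | h
    · exact (step 191 (by norm_num) a ha hb hT h0 z hz.1 hz.2 h).2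
    · have h6 : nd (191 + 1) = 6 := by unfold nd; norm_num
      have h1 := (step 191 (by norm_num) a ha hb hT h0 (nd (191 + 1)) hb (h.trans hz.2) le_rfl).1
      unfold PTube at h1
      rw [lin_right, lin_right, rlin_right, rlin_right, h6] at h1
      have h2 := exit_tube hexit h1
      rw [h6] at h hb
      have h3 := outer hc0 hc1 (e := 1) (by norm_num) (a := 6) (b := s1)
        (fun s hs => by rw [one_mul]; exact hs.1) (hT.mono hb le_rfl) h2 z ⟨h, hz.2⟩
      exact otube_good (by norm_num) (by linarith) h3
  | succ m ih =>
    intro n hn a ha hb hT h0 z hz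
    rcases le_total z (nd (n + 1)) with h | h
    · exact (step n (by omega) a ha hb hT h0 z hz.1 hz.2 h).2
    · have h1 := (step n (by omega) a ha hb hT h0 (nd (n + 1)) hb (h.trans hz.2) le_rfl).1
      refine ih (n + 1) (by omega) (nd (n + 1)) le_rfl (by rw [nd_succ (n + 1)]; linarith)
        (hT.mono hb le_rfl) ?_ z ⟨h, hz.2⟩
      unfold PTube at h1 ⊢
      rw [lin_right, lin_right, rlin_right, rlin_right] at h1
      rw [lin_left, lin_left, rlin_left, rlin_left]
      exact h1

theorem intube_self {q u W : ℂ} {ρ σ : ℝ} (hρ : 0 ≤ ρ) (hσ : 0 ≤ σ) :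
    InTube q u ρ σ W (q * W) (u * W) := by
  constructor <;> simp <;> positivity

theorem forward_band {C w : ℤ} {c : ℝ} (hgo : go C w 192 0 startSt = true) (hc0 : -0.02 ≤ c) (hc1 : c ≤ 1)
    (hc : |c - C * eD| ≤ w * eD) (s0 s1 : ℝ) :
    ∃ q u : ℂ, ∀ W V G : ℝ → ℂ, Trip c s0 s1 W V G → V s0 = q * W s0 → G s0 = u * W s0 →
      ∀ z ∈ Set.Icc s0 s1, Good z (W z) (G z) := by
  rcases le_or_gt s0 (-6) with hl | hl
  · refine ⟨qo (-1) s0, uo (-1) s0, fun W V G hT h1 h2 => ?_⟩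
    have h0 : OTube (-1) s0 (W s0) (V s0) (G s0) := by
      rw [h1, h2]
      have := (xo_ge (e := -1) (s := s0) (by linarith)).1
      exact intube_self (by norm_num) (by positivity)
    intro z hz
    have ho : ∀ y, s0 ≤ y → y ≤ s1 → y ≤ -6 → OTube (-1) y (W y) (V y) (G y) := by
      intro y h1 h2 h3
      exact outer hc0 hc1 (e := -1) (by norm_num) (a := s0) (b := y)
        (fun s hs => by have := hs.2; linarith) (hT.mono le_rfl h2) h0 y ⟨h1, le_rfl⟩
    rcases le_total z (-6) with h | h
    · exact otube_good (by norm_num) (by linarith) (ho z hz.1 hz.2 h)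
    · have h6 : nd 0 = -6 := by unfold nd; norm_num
      have h3 := init_tube (ho (-6) hl (h.trans hz.2) le_rfl)
      refine mid_chain hgo hc0 hc1 hc 191 0 (by norm_num) (-6) h6.le (by rw [nd_succ, h6]; norm_num)
        (hT.mono hl le_rfl) ?_ z ⟨h, hz.2⟩
      unfold PTube
      rw [h6, lin_left, lin_left, rlin_left, rlin_left]
      exact h3
  · rcases le_or_gt 6 s0 with hr | hr
    · refine ⟨qo 1 s0, uo 1 s0, fun W V G hT h1 h2 => ?_⟩
      have h0 : OTube 1 s0 (W s0) (V s0) (G s0) := by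
        rw [h1, h2]
        have := (xo_ge (e := 1) (s := s0) (by linarith)).1
        exact intube_self (by norm_num) (by positivity)
      intro z hz
      exact otube_good (by norm_num) (by linarith [hz.1]) (outer hc0 hc1 (e := 1) (by norm_num)
        (fun s hs => by have := hs.1; linarith) hT h0 z hz)
    · obtain ⟨hchk, hnode, hexit⟩ := go_sound C w 192 0 hgo
      simp only [zero_add, Nat.zero_le, true_imp_iff] at hchk hnode hexit
      set n := ⌊16 * (s0 + 6)⌋₊ with hn
      have hp : 0 ≤ 16 * (s0 + 6) := by linarith
      have f1 : (n:ℝ) ≤ 16 * (s0 + 6) := Nat.floor_le hp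
      have f2 : 16 * (s0 + 6) < n + 1 := Nat.lt_floor_add_one _
      have f3 : n < 192 := by
        have : (n:ℝ) < 192 := by linarith
        exact_mod_cast this
      have a1 : nd n ≤ s0 := by unfold nd; linarith
      have a2 : s0 ≤ nd (n + 1) := by rw [nd_succ]; unfold nd; linarith
      refine ⟨lin (nd n) (qS (seq C w n)) (qS (seq C w (n + 1))) s0,
        lin (nd n) (uS (seq C w n)) (uS (seq C w (n + 1))) s0, fun W V G hT h1 h2 => ?_⟩
      refine mid_chain hgo hc0 hc1 hc (191 - n) n (by omega) s0 a1 a2 hT ?_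
      unfold PTube
      rw [h1, h2]
      have he : 0 < eD := by unfold eD; norm_num
      have hpos : ∀ r : St, nodeChk r = true → 0 ≤ rS r ∧ 0 ≤ gS r := by
        intro r hr
        simp only [nodeChk, Bool.and_eq_true, decide_eq_true_eq] at hr
        exact ⟨mul_nonneg (by exact_mod_cast hr.1.1.1.1.le) he.le,
          mul_nonneg (by exact_mod_cast hr.1.1.1.2.le) he.le⟩
      obtain ⟨p1, p2⟩ := hpos _ (hnode n f3.le)
      obtain ⟨p3, p4⟩ := hpos _ (hnode (n + 1) f3)
      rw [nd_succ] at a2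
      apply intube_self
      · unfold rlin; nlinarith
      · unfold rlin; nlinarith

theorem forward {c : ℝ} (hc0 : -0.02 ≤ c) (hc1 : c ≤ 1) (s0 s1 : ℝ) :
    ∃ q u : ℂ, ∀ W V G : ℝ → ℂ, Trip c s0 s1 W V G → V s0 = q * W s0 → G s0 = u * W s0 →
      ∀ z ∈ Set.Icc s0 s1, Good z (W z) (G z) := by
  rcases le_total c 0.12 with h | h
  · refine forward_band go1 hc0 hc1 ?_ s0 s1
    rw [abs_le]; unfold eD; push_cast; constructor <;> linarith
  · rcases le_total c 0.4 with h' | h'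
    · refine forward_band go2 hc0 hc1 ?_ s0 s1
      rw [abs_le]; unfold eD; push_cast; constructor <;> linarith
    · refine forward_band go3 hc0 hc1 ?_ s0 s1
      rw [abs_le]; unfold eD; push_cast; constructor <;> linarith

end OS


namespace OS

/-- Solutions of the (scaled) equation for the vorticity. -/
structure Sol (L c lam : ℝ) (w v : ℝ → ℂ) : Prop where
  cont : Continuous w
  d1 : ∀ y ∈ Set.Icc (-1:ℝ) 1, HasDerivAt w (v y) y
  d2 : ∀ y ∈ Set.Icc (-1:ℝ) 1, HasDerivAt v
    (((L:ℂ) ^ 2 * (c:ℂ) + Complex.I * (L:ℂ) ^ 3 * ((y:ℂ) - (lam:ℂ))) * w y) y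

theorem Sol.comb {L c lam : ℝ} {w v w' v' : ℝ → ℂ} (h : Sol L c lam w v) (h' : Sol L c lam w' v')
    (a b : ℂ) : Sol L c lam (fun y => a * w y + b * w' y) (fun y => a * v y + b * v' y) := by
  refine ⟨(continuous_const.mul h.cont).add (continuous_const.mul h'.cont), fun y hy => ?_,
    fun y hy => ?_⟩
  · exact ((h.d1 y hy).const_mul a).add ((h'.d1 y hy).const_mul b)
  · refine (((h.d2 y hy).const_mul a).add ((h'.d2 y hy).const_mul b)).congr_deriv ?_
    ring

theorem Sol.uniq {L c lam : ℝ} {w v : ℝ → ℂ} (h : Sol L c lam w v)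
    (h0 : w (-1) = 0) (h1 : v (-1) = 0) : ∀ y ∈ Set.Icc (-1:ℝ) 1, w y = 0 := by
  have cc : Continuous fun y : ℝ => ((L:ℂ) ^ 2 * (c:ℂ) + Complex.I * (L:ℂ) ^ 3 * ((y:ℂ) - (lam:ℂ))) := by
    fun_prop
  obtain ⟨K, hK⟩ := isCompact_Icc.exists_bound_of_continuousOn (cc.continuousOn (s := Set.Icc (-1:ℝ) 1))
  have hb := barrier (K := 1 + K) (f := fun y => ‖w y‖ ^ 2 + ‖v y‖ ^ 2) (a := -1) (b := 1)
    (fun y hy => (hasDerivAt_normSq' (h.d1 y hy)).add (hasDerivAt_normSq' (h.d2 y hy)))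
    (by simp [h0, h1]) ?_
  · intro y hy
    have := hb y hy
    have h2 : ‖w y‖ ^ 2 = 0 := by nlinarith [sq_nonneg ‖w y‖, sq_nonneg ‖v y‖]
    simpa using h2
  · intro y hy _
    have a1 := re_mul_conj_le (v y) (w y)
    have a2 := re_mul_conj_le (((L:ℂ) ^ 2 * (c:ℂ) + Complex.I * (L:ℂ) ^ 3 * ((y:ℂ) - (lam:ℂ))) * w y) (v y)
    rw [norm_mul] at a2
    have a3 := hK y hy
    have n1 := norm_nonneg (w y)
    have n2 := norm_nonneg (v y)
    have a4 : ‖(L:ℂ) ^ 2 * (c:ℂ) + Complex.I * (L:ℂ) ^ 3 * ((y:ℂ) - (lam:ℂ))‖ * ‖w y‖ * ‖v y‖ ≤ K * (‖w y‖ * ‖v y‖) := by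
      rw [mul_assoc]
      exact mul_le_mul_of_nonneg_right a3 (by positivity)
    have hK0 : 0 ≤ K := (norm_nonneg _).trans a3
    have a5 : 2 * (‖w y‖ * ‖v y‖) ≤ ‖w y‖ ^ 2 + ‖v y‖ ^ 2 := by nlinarith [sq_nonneg (‖w y‖ - ‖v y‖)]
    have a6 := mul_le_mul_of_nonneg_left a5 hK0
    nlinarith

/-- Any Cauchy data at `-1` is attained in the span of two independent solutions. -/
theorem cauchy {L c lam : ℝ} {f1 g1 f2 g2 : ℝ → ℂ} (h1 : Sol L c lam f1 g1) (h2 : Sol L c lam f2 g2)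
    (hnd : ∀ a b : ℂ, (∀ y ∈ Set.Icc (-1:ℝ) 1, a * f1 y + b * f2 y = 0) → a = 0 ∧ b = 0) (α β : ℂ) :
    ∃ a b : ℂ, a * f1 (-1) + b * f2 (-1) = α ∧ a * g1 (-1) + b * g2 (-1) = β := by
  have inj : ∀ a b : ℂ, a * f1 (-1) + b * f2 (-1) = 0 → a * g1 (-1) + b * g2 (-1) = 0 → a = 0 ∧ b = 0 :=
    fun a b e1 e2 => hnd a b ((h1.comb h2 a b).uniq e1 e2)
  have hD : f1 (-1) * g2 (-1) - f2 (-1) * g1 (-1) ≠ 0 := by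
    intro hD
    obtain ⟨p1, p2⟩ := inj (f2 (-1)) (-f1 (-1)) (by ring) (by linear_combination -hD)
    obtain ⟨p3, p4⟩ := inj (g2 (-1)) (-g1 (-1)) (by linear_combination hD) (by ring)
    have := (inj 1 0 (by rw [neg_eq_zero] at p2; rw [p2]; ring)
      (by rw [neg_eq_zero] at p4; rw [p4]; ring)).1
    exact one_ne_zero this
  refine ⟨(α * g2 (-1) - β * f2 (-1)) / (f1 (-1) * g2 (-1) - f2 (-1) * g1 (-1)),
    (β * f1 (-1) - α * g1 (-1)) / (f1 (-1) * g2 (-1) - f2 (-1) * g1 (-1)), ?_, ?_⟩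
  · rw [div_mul_eq_mul_div, div_mul_eq_mul_div, ← add_div, div_eq_iff hD]
    ring
  · rw [div_mul_eq_mul_div, div_mul_eq_mul_div, ← add_div, div_eq_iff hD]
    ring

/-- A boundary layer solution at `y = 1`, with its primitive. -/
structure Layer (L lam : ℝ) (V g : ℝ → ℂ) : Prop where
  d : ∀ y ∈ Set.Icc (-1:ℝ) 1, HasDerivAt g (V y) y
  one : g 1 = 1
  dec : ∀ y ∈ Set.Icc (-1:ℝ) 1, ‖g y‖ ≤ Real.exp (-(0.2 * L * (1 - y)))
  sup : ∀ y ∈ Set.Icc (-1:ℝ) 1,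
    ‖V y‖ ≤ 100 * L * Real.sqrt (1 + L * |y - lam|) * Real.exp (-(0.2 * L * (1 - y)))
  l1 : ∫ y in (-1:ℝ)..1, ‖V y‖ ≤ 500

set_option maxHeartbeats 1600000 in
theorem layer {L c lam : ℝ} (hL : 1 ≤ L) (hc0 : -0.02 ≤ c) (hc1 : c ≤ 1) {f1 g1 f2 g2 : ℝ → ℂ}
    (h1 : Sol L c lam f1 g1) (h2 : Sol L c lam f2 g2)
    (hnd : ∀ a b : ℂ, (∀ y ∈ Set.Icc (-1:ℝ) 1, a * f1 y + b * f2 y = 0) → a = 0 ∧ b = 0) :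
    ∃ (a b : ℂ) (g : ℝ → ℂ), Layer L lam (fun y => a * f1 y + b * f2 y) g := by
  have hL0 : 0 < L := by linarith
  have hLc : (L:ℂ) ≠ 0 := by exact_mod_cast hL0.ne'
  obtain ⟨q, u, hfw⟩ := forward hc0 hc1 (L * (-1 - lam)) (L * (1 - lam))
  obtain ⟨a, b, e1, e2⟩ := cauchy h1 h2 hnd 1 (L * q)
  have hs := h1.comb h2 a b
  set V : ℝ → ℂ := fun y => a * f1 y + b * f2 y with hV
  set V' : ℝ → ℂ := fun y => a * g1 y + b * g2 y with hV'
  set g : ℝ → ℂ := fun y => u / L + ∫ t in (-1:ℝ)..y, V t with hg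
  have hgd : ∀ y, HasDerivAt g (V y) y := fun y =>
    ((hs.cont.integral_hasStrictDerivAt (-1) y).hasDerivAt).const_add _
  have hyd : ∀ s : ℝ, HasDerivAt (fun s : ℝ => lam + s / L) (1 / L) s := fun s =>
    ((hasDerivAt_id s).div_const L).const_add lam
  have hmem : ∀ s ∈ Set.Icc (L * (-1 - lam)) (L * (1 - lam)), lam + s / L ∈ Set.Icc (-1:ℝ) 1 := by
    intro s hs
    constructor
    · have : (-1 - lam) ≤ s / L := by rw [le_div_iff₀ hL0]; linarith [hs.1]
      linarith
    · have : s / L ≤ (1 - lam) := by rw [div_le_iff₀ hL0]; linarith [hs.2]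
      linarith
  have hy0 : lam + L * (-1 - lam) / L = -1 := by field_simp; ring
  have hgood : ∀ y ∈ Set.Icc (-1:ℝ) 1, 0.2 * L * ‖g y‖ ^ 2 ≤ (V y * (starRingEnd ℂ) (g y)).re ∧
      ‖V y‖ * ‖g y‖ ≤ 500 * (V y * (starRingEnd ℂ) (g y)).re ∧
      ‖V y‖ ≤ 100 * L * Real.sqrt (1 + L * |y - lam|) * ‖g y‖ := by
    intro y hy
    have hT : Trip c (L * (-1 - lam)) (L * (1 - lam)) (fun s => V (lam + s / L))
        (fun s => (1 / L : ℝ) • V' (lam + s / L)) (fun s => (L : ℂ) * g (lam + s / L)) := by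
      refine ⟨fun s hs' => ?_, fun s hs' => ?_, fun s hs' => ?_⟩
      · exact (hs.d1 _ (hmem s hs')).scomp s (hyd s)
      · refine (((hs.d2 _ (hmem s hs')).scomp s (hyd s)).const_smul (1 / L : ℝ)).congr_deriv ?_
        simp only [Complex.real_smul]
        push_cast
        field_simp
        ring
      · refine (((hgd _).scomp s (hyd s)).const_mul (L:ℂ)).congr_deriv ?_
        simp only [Complex.real_smul]
        push_cast
        field_simp
    have hG := hfw _ _ _ hT (by
        simp only [hy0, Complex.real_smul]
        rw [show V' (-1) = L * q from e2, show V (-1) = 1 from e1]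
        push_cast
        field_simp) (by
        simp only [hy0]
        rw [show V (-1) = 1 from e1]
        simp [hg]
        field_simp) (L * (y - lam)) ⟨by nlinarith [hy.1], by nlinarith [hy.2]⟩
    have hyy : lam + L * (y - lam) / L = y := by field_simp; ring
    simp only [hyy] at hG
    obtain ⟨k1, k2, k3⟩ := hG
    have hre : (V y * (starRingEnd ℂ) ((L:ℂ) * g y)).re = L * (V y * (starRingEnd ℂ) (g y)).re := by
      rw [map_mul, Complex.conj_ofReal, mul_left_comm, Complex.re_ofReal_mul]
    rw [hre, norm_mul, Complex.norm_real, Real.norm_of_nonneg hL0.le] at k1 k2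
    rw [norm_mul, Complex.norm_real, Real.norm_of_nonneg hL0.le, abs_mul, abs_of_pos hL0] at k3
    refine ⟨?_, ?_, by linarith⟩
    · apply le_of_mul_le_mul_left _ hL0
      linarith
    · apply le_of_mul_le_mul_left _ hL0
      linarith
  -- monotonicity of the weighted square
  have hmd : ∀ y, HasDerivAt (fun y => ‖g y‖ ^ 2 * Real.exp (-(0.4 * L * y)))
      (2 * (V y * (starRingEnd ℂ) (g y)).re * Real.exp (-(0.4 * L * y))
        + ‖g y‖ ^ 2 * (Real.exp (-(0.4 * L * y)) * (-(0.4 * L)))) y := by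
    intro y
    have : HasDerivAt (fun y : ℝ => -(0.4 * L * y)) (-(0.4 * L)) y := by
      have h9 := (hasDerivAt_id y).const_mul (-(0.4 * L))
      have e9 : (fun y : ℝ => -(0.4 * L * y)) = fun y : ℝ => -(0.4 * L) * id y := by
        funext y; simp
      rw [e9]
      exact h9.congr_deriv (by ring)
    exact (hasDerivAt_normSq' (hgd y)).mul this.exp
  have hmono : MonotoneOn (fun y => ‖g y‖ ^ 2 * Real.exp (-(0.4 * L * y))) (Set.Icc (-1:ℝ) 1) := by
    refine monotoneOn_of_hasDerivWithinAt_nonneg (convex_Icc _ _)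
      (fun y _ => (hmd y).continuousAt.continuousWithinAt) (fun y _ => (hmd y).hasDerivWithinAt) ?_
    intro y hy
    have := (hgood y (interior_subset hy)).1
    have := mul_le_mul_of_nonneg_right this (Real.exp_pos (-(0.4 * L * y))).le
    linarith
  have hm1 : (-1:ℝ) ∈ Set.Icc (-1:ℝ) 1 := by simp
  have hp1 : (1:ℝ) ∈ Set.Icc (-1:ℝ) 1 := by simp
  have hgm1 : g (-1) ≠ 0 := by
    intro h0
    have := (hgood (-1) hm1).2.2
    rw [h0, show V (-1) = 1 from e1] at this
    simp at this
    linarith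
  have hgne : ∀ y ∈ Set.Icc (-1:ℝ) 1, g y ≠ 0 := by
    intro y hy h0
    have := hmono hm1 hy hy.1
    simp only [h0, norm_zero] at this
    have h3 : 0 < ‖g (-1)‖ ^ 2 * Real.exp (-(0.4 * L * -1)) := by
      have := norm_pos_iff.2 hgm1
      positivity
    norm_num at this h3
    linarith
  set n1 := ‖g 1‖ with hn1
  have hn1p : 0 < n1 := norm_pos_iff.2 (hgne 1 hp1)
  have hdec : ∀ y ∈ Set.Icc (-1:ℝ) 1, ‖g y‖ ≤ n1 * Real.exp (-(0.2 * L * (1 - y))) := by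
    intro y hy
    have := hmono hy hp1 hy.2
    simp only [mul_one] at this
    rw [← hn1] at this
    apply (abs_le_of_sq_le_sq' _ (by positivity)).2
    have e3 : (n1 * Real.exp (-(0.2 * L * (1 - y)))) ^ 2
        = n1 ^ 2 * Real.exp (-(0.4 * L)) * Real.exp (0.4 * L * y) := by
      rw [mul_pow, ← Real.exp_nat_mul, mul_assoc (n1 ^ 2), ← Real.exp_add]
      congr 2
      push_cast
      ring
    rw [e3]
    have e4 : ‖g y‖ ^ 2 = ‖g y‖ ^ 2 * Real.exp (-(0.4 * L * y)) * Real.exp (0.4 * L * y) := by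
      rw [mul_assoc, ← Real.exp_add]; simp
    rw [e4]
    exact mul_le_mul_of_nonneg_right this (Real.exp_pos _).le
  have hnd' : ∀ y ∈ Set.Icc (-1:ℝ) 1, HasDerivAt (fun y => ‖g y‖)
      ((V y * (starRingEnd ℂ) (g y)).re / ‖g y‖) y := by
    intro y hy
    have hp := norm_pos_iff.2 (hgne y hy)
    have h3 := (hasDerivAt_normSq' (hgd y)).sqrt (by positivity)
    have e5 : (fun y => Real.sqrt (‖g y‖ ^ 2)) = fun y => ‖g y‖ := by
      funext y; exact Real.sqrt_sq (norm_nonneg _)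
    rw [e5] at h3
    refine h3.congr_deriv ?_
    rw [Real.sqrt_sq hp.le]
    field_simp
  have hPd : ∀ y ∈ Set.Icc (-1:ℝ) 1, HasDerivAt (fun y => (∫ t in (-1:ℝ)..y, ‖V t‖) - 500 * ‖g y‖)
      (‖V y‖ - 500 * ((V y * (starRingEnd ℂ) (g y)).re / ‖g y‖)) y := by
    intro y hy
    exact ((hs.cont.norm.integral_hasStrictDerivAt (-1) y).hasDerivAt).sub ((hnd' y hy).const_mul 500)
  have hanti : AntitoneOn (fun y => (∫ t in (-1:ℝ)..y, ‖V t‖) - 500 * ‖g y‖) (Set.Icc (-1:ℝ) 1) := by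
    refine antitoneOn_of_hasDerivWithinAt_nonpos (convex_Icc _ _)
      (fun y hy => (hPd y hy).continuousAt.continuousWithinAt)
      (fun y hy => (hPd y (interior_subset hy)).hasDerivWithinAt) ?_
    intro y hy
    have hy' := interior_subset hy
    have hp := norm_pos_iff.2 (hgne y hy')
    have := (hgood y hy').2.1
    rw [sub_nonpos, ← mul_div_assoc, le_div_iff₀ hp]
    exact this
  have hint : ∫ t in (-1:ℝ)..1, ‖V t‖ ≤ 500 * n1 := by
    have := hanti hm1 hp1 (by norm_num)
    simp only [intervalIntegral.integral_same] at this
    have := norm_nonneg (g (-1))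
    linarith
  -- normalisation
  have hg1 : g 1 ≠ 0 := hgne 1 hp1
  have hVeq : (fun y => (a / g 1) * f1 y + (b / g 1) * f2 y) = fun y => (g 1)⁻¹ * V y := by
    funext y; simp only [hV]; field_simp
  refine ⟨a / g 1, b / g 1, fun y => (g 1)⁻¹ * g y, ?_⟩
  rw [hVeq]
  refine ⟨fun y _ => (hgd y).const_mul _, inv_mul_cancel₀ hg1, fun y hy => ?_, fun y hy => ?_, ?_⟩
  · rw [norm_mul, norm_inv, ← hn1, inv_mul_le_iff₀ hn1p]
    exact hdec y hy
  · rw [norm_mul, norm_inv, ← hn1, inv_mul_le_iff₀ hn1p]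
    refine ((hgood y hy).2.2).trans ?_
    have := mul_le_mul_of_nonneg_left (hdec y hy)
      (by positivity : 0 ≤ 100 * L * Real.sqrt (1 + L * |y - lam|))
    linarith
  · simp only [norm_mul, norm_inv, ← hn1]
    rw [intervalIntegral.integral_const_mul, inv_mul_le_iff₀ hn1p]
    linarith

end OS


namespace OS

open Complex in
/-- The two boundary functionals. -/
noncomputable def lp (k : ℝ) (w : ℝ → ℂ) : ℂ :=
  ∫ y in (-1:ℝ)..1, w y * ((Real.exp (k * (y - 1)) : ℝ) : ℂ)

noncomputable def lm (k : ℝ) (w : ℝ → ℂ) : ℂ :=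
  ∫ y in (-1:ℝ)..1, w y * ((Real.exp (-(k * (y + 1))) : ℝ) : ℂ)

theorem lp_comb (k : ℝ) {f g : ℝ → ℂ} (hf : Continuous f) (hg : Continuous g) (a b : ℂ) :
    lp k (fun y => a * f y + b * g y) = a * lp k f + b * lp k g := by
  unfold lp
  rw [← intervalIntegral.integral_const_mul, ← intervalIntegral.integral_const_mul,
    ← intervalIntegral.integral_add]
  · congr 1; funext y; ring
  · exact Continuous.intervalIntegrable (by fun_prop) _ _
  · exact Continuous.intervalIntegrable (by fun_prop) _ _

theorem lm_comb (k : ℝ) {f g : ℝ → ℂ} (hf : Continuous f) (hg : Continuous g) (a b : ℂ) :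
    lm k (fun y => a * f y + b * g y) = a * lm k f + b * lm k g := by
  unfold lm
  rw [← intervalIntegral.integral_const_mul, ← intervalIntegral.integral_const_mul,
    ← intervalIntegral.integral_add]
  · congr 1; funext y; ring
  · exact Continuous.intervalIntegrable (by fun_prop) _ _
  · exact Continuous.intervalIntegrable (by fun_prop) _ _

theorem lp_zero (k : ℝ) {f : ℝ → ℂ} (h : ∀ y ∈ Set.Icc (-1:ℝ) 1, f y = 0) : lp k f = 0 := by
  unfold lp
  rw [intervalIntegral.integral_congr (g := fun _ => (0:ℂ))]
  · simp
  · intro y hy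
    rw [Set.uIcc_of_le (by norm_num)] at hy
    simp [h y hy]

theorem lm_zero (k : ℝ) {f : ℝ → ℂ} (h : ∀ y ∈ Set.Icc (-1:ℝ) 1, f y = 0) : lm k f = 0 := by
  unfold lm
  rw [intervalIntegral.integral_congr (g := fun _ => (0:ℂ))]
  · simp
  · intro y hy
    rw [Set.uIcc_of_le (by norm_num)] at hy
    simp [h y hy]

/-- Reflection. -/
noncomputable def rf (w : ℝ → ℂ) : ℝ → ℂ := fun y => (starRingEnd ℂ) (w (-y))

theorem conj_integral (f : ℝ → ℂ) (a b : ℝ) :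
    (starRingEnd ℂ) (∫ y in a..b, f y) = ∫ y in a..b, (starRingEnd ℂ) (f y) := by
  simp only [intervalIntegral, map_sub, integral_conj]

theorem lp_rf (k : ℝ) (w : ℝ → ℂ) : lp k (rf w) = (starRingEnd ℂ) (lm k w) := by
  unfold lp lm rf
  rw [conj_integral]
  have := intervalIntegral.integral_comp_neg (a := -1) (b := 1)
    (fun y : ℝ => (starRingEnd ℂ) (w y * ((Real.exp (-(k * (y + 1))) : ℝ) : ℂ)))
  rw [neg_neg] at this
  rw [← this]
  congr 1; funext y
  rw [map_mul, Complex.conj_ofReal]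
  congr 4
  ring

theorem lm_rf (k : ℝ) (w : ℝ → ℂ) : lm k (rf w) = (starRingEnd ℂ) (lp k w) := by
  unfold lp lm rf
  rw [conj_integral]
  have := intervalIntegral.integral_comp_neg (a := -1) (b := 1)
    (fun y : ℝ => (starRingEnd ℂ) (w y * ((Real.exp (k * (y - 1)) : ℝ) : ℂ)))
  rw [neg_neg] at this
  rw [← this]
  congr 1; funext y
  rw [map_mul, Complex.conj_ofReal]
  congr 4
  ring

theorem int_rf (w : ℝ → ℂ) : ∫ y in (-1:ℝ)..1, ‖rf w y‖ = ∫ y in (-1:ℝ)..1, ‖w y‖ := by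
  have := intervalIntegral.integral_comp_neg (a := -1) (b := 1) (fun y : ℝ => ‖w y‖)
  rw [neg_neg] at this
  rw [← this]
  simp [rf]

theorem rf_rf (w : ℝ → ℂ) : rf (rf w) = w := by
  funext y; simp [rf]

theorem hasDerivAt_conj {f : ℝ → ℂ} {f' : ℂ} {y : ℝ} (h : HasDerivAt f f' y) :
    HasDerivAt (fun y => (starRingEnd ℂ) (f y)) ((starRingEnd ℂ) f') y := by
  have := h.star
  exact this

theorem Sol.refl {L c lam : ℝ} {w v : ℝ → ℂ} (h : Sol L c lam w v) :
    Sol L c (-lam) (rf w) (fun y => -rf v y) := by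
  have hm : ∀ y ∈ Set.Icc (-1:ℝ) 1, -y ∈ Set.Icc (-1:ℝ) 1 := fun y hy =>
    ⟨by linarith [hy.2], by linarith [hy.1]⟩
  have hn : ∀ y : ℝ, HasDerivAt (fun y : ℝ => -y) (-1) y := fun y => hasDerivAt_neg y
  refine ⟨?_, fun y hy => ?_, fun y hy => ?_⟩
  · exact Complex.continuous_conj.comp (h.cont.comp continuous_neg)
  · have := hasDerivAt_conj ((h.d1 _ (hm y hy)).scomp y (hn y))
    refine HasDerivAt.congr_deriv this ?_
    simp [rf]
  · have := (hasDerivAt_conj ((h.d2 _ (hm y hy)).scomp y (hn y))).neg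
    refine HasDerivAt.congr_deriv this ?_
    simp [rf, -map_pow, map_pow]
    left; ring

/-- integral of an exponential -/
theorem int_exp (a b : ℝ) (ha : a ≠ 0) :
    ∫ y in (-1:ℝ)..1, Real.exp (a * y + b) = (Real.exp (a + b) - Real.exp (-a + b)) / a := by
  have hd : ∀ y : ℝ, HasDerivAt (fun y => Real.exp (a * y + b) / a) (Real.exp (a * y + b)) y := by
    intro y
    have h1 : HasDerivAt (fun y : ℝ => a * y + b) a y := by
      have := ((hasDerivAt_id y).const_mul a).add_const b
      simpa using this
    refine (h1.exp.div_const a).congr_deriv ?_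
    field_simp
  rw [intervalIntegral.integral_eq_sub_of_hasDerivAt (fun y _ => hd y)
    (Continuous.intervalIntegrable (by fun_prop) _ _)]
  rw [← sub_div]
  congr 4 <;> ring

theorem AB {k μ : ℝ} (hk : 0 < k) (hμ : 0 < μ) (hμ1 : μ ≠ 1) {V g : ℝ → ℂ} (hV : Continuous V)
    (hd : ∀ y ∈ Set.Icc (-1:ℝ) 1, HasDerivAt g (V y) y) (h1 : g 1 = 1)
    (hdec : ∀ y ∈ Set.Icc (-1:ℝ) 1, ‖g y‖ ≤ Real.exp (-(μ * k * (1 - y)))) :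
    (1 - Real.exp (-(2 * (1 + μ) * k))) * (μ / (1 + μ)) ≤ ‖lp k V‖ ∧
    ‖lm k V‖ ≤ Real.exp (-(2 * k)) + Real.exp (-(2 * μ * k)) +
      (Real.exp (-(2 * k)) - Real.exp (-(2 * μ * k))) / (μ - 1) := by
  have hu : Set.uIcc (-1:ℝ) 1 = Set.Icc (-1:ℝ) 1 := Set.uIcc_of_le (by norm_num)
  have hgc : ContinuousOn g (Set.uIcc (-1:ℝ) 1) := by
    rw [hu]; exact fun y hy => (hd y hy).continuousAt.continuousWithinAt
  have key : ∀ (e : ℝ → ℝ) (r : ℝ), (∀ y, HasDerivAt e (r * e y) y) →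
      (∫ y in (-1:ℝ)..1, V y * (e y : ℂ)) = g 1 * (e 1 : ℂ) - g (-1) * (e (-1) : ℂ)
        - (r:ℂ) * ∫ y in (-1:ℝ)..1, g y * (e y : ℂ) := by
    intro e r he
    have hec : Continuous e := continuous_iff_continuousAt.2 fun y => (he y).continuousAt
    have hec' : Continuous fun y => ((e y : ℝ) : ℂ) := Complex.continuous_ofReal.comp hec
    have i1 : IntervalIntegrable (fun y => V y * (e y : ℂ)) MeasureTheory.volume (-1) 1 :=
      (hV.mul hec').intervalIntegrable _ _
    have i2 : IntervalIntegrable (fun y => (r:ℂ) * (g y * (e y : ℂ))) MeasureTheory.volume (-1) 1 :=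
      ContinuousOn.intervalIntegrable (continuousOn_const.mul (hgc.mul hec'.continuousOn))
    have := intervalIntegral.integral_eq_sub_of_hasDerivAt (a := -1) (b := 1)
      (f := fun y => g y * (e y : ℂ)) (f' := fun y => V y * (e y : ℂ) + (r:ℂ) * (g y * (e y : ℂ)))
      (fun y hy => by
        rw [hu] at hy
        refine ((hd y hy).mul (he y).ofReal_comp).congr_deriv ?_
        push_cast; ring) (i1.add i2)
    rw [intervalIntegral.integral_add i1 i2, intervalIntegral.integral_const_mul] at this
    linear_combination this
  have gm := hdec (-1) (by simp)
  have bd : ∀ (e : ℝ → ℝ) (a b : ℝ), a ≠ 0 → Continuous e → (∀ y, 0 ≤ e y) →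
      (∀ y, Real.exp (-(μ * k * (1 - y))) * e y = Real.exp (a * y + b)) →
      ‖∫ y in (-1:ℝ)..1, g y * (e y : ℂ)‖ ≤ (Real.exp (a + b) - Real.exp (-a + b)) / a := by
    intro e a b ha hec he0 hee
    rw [← int_exp a b ha]
    refine intervalIntegral.norm_integral_le_of_norm_le (by norm_num) ?_
      (Continuous.intervalIntegrable (by fun_prop) _ _)
    refine Filter.Eventually.of_forall fun y hy => ?_
    rw [norm_mul, Complex.norm_real, Real.norm_of_nonneg (he0 y), ← hee y]
    exact mul_le_mul_of_nonneg_right (hdec y ⟨hy.1.le, hy.2⟩) (he0 y)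
  constructor
  · have k1 := key (fun y => Real.exp (k * (y - 1))) k (fun y => by
      have h : HasDerivAt (fun y : ℝ => k * (y - 1)) k y := by
        simpa using ((hasDerivAt_id y).sub_const 1).const_mul k
      exact h.exp.congr_deriv (by ring))
    have k2 := bd (fun y => Real.exp (k * (y - 1))) ((1 + μ) * k) (-((1 + μ) * k)) (by positivity)
      (by fun_prop) (fun y => (Real.exp_pos _).le) (fun y => by
        rw [← Real.exp_add]; congr 1; ring)
    simp only [sub_self, mul_zero, Real.exp_zero, h1] at k1
    unfold lp
    rw [k1]
    have e0 : Real.exp (-((1 + μ) * k) + -((1 + μ) * k)) = Real.exp (-(2 * (1 + μ) * k)) := by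
      congr 1; ring
    rw [add_neg_cancel, Real.exp_zero, e0] at k2
    set J := ∫ y in (-1:ℝ)..1, g y * ((Real.exp (k * (y - 1)) : ℝ) : ℂ)
    set E := Real.exp (-(2 * (1 + μ) * k)) with hE
    have n1 : ‖g (-1) * ((Real.exp (k * (-1 - 1)) : ℝ) : ℂ)‖ ≤ E := by
      rw [norm_mul, Complex.norm_real, Real.norm_of_nonneg (Real.exp_pos _).le]
      refine (mul_le_mul_of_nonneg_right gm (Real.exp_pos _).le).trans ?_
      rw [← Real.exp_add, hE]
      apply Real.exp_le_exp.2
      linarith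
    have n2 : ‖(k:ℂ) * J‖ ≤ (1 - E) / (1 + μ) := by
      rw [norm_mul, Complex.norm_real, Real.norm_of_nonneg hk.le]
      refine (mul_le_mul_of_nonneg_left k2 hk.le).trans (le_of_eq ?_)
      field_simp
    have n3 := norm_sub_norm_le (1:ℂ) (g (-1) * ((Real.exp (k * (-1 - 1)) : ℝ) : ℂ) + (k:ℂ) * J)
    have n4 := norm_add_le (g (-1) * ((Real.exp (k * (-1 - 1)) : ℝ) : ℂ)) ((k:ℂ) * J)
    rw [norm_one] at n3
    have e1 : (1 - E) * (μ / (1 + μ)) = 1 - E - (1 - E) / (1 + μ) := by field_simp; ring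
    rw [e1]
    have e2 : (1:ℂ) * ((1:ℝ):ℂ) - g (-1) * ((Real.exp (k * (-1 - 1)) : ℝ) : ℂ) - (k:ℂ) * J
      = 1 - (g (-1) * ((Real.exp (k * (-1 - 1)) : ℝ) : ℂ) + (k:ℂ) * J) := by push_cast; ring
    rw [e2]
    generalize g (-1) * ((Real.exp (k * (-1 - 1)) : ℝ) : ℂ) = X at n1 n3 n4 ⊢
    generalize (k:ℂ) * J = Y at n2 n3 n4 ⊢
    generalize (1 - E) / (1 + μ) = Z at n2 ⊢
    linarith
  · have k1 := key (fun y => Real.exp (-(k * (y + 1)))) (-k) (fun y => by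
      have h : HasDerivAt (fun y : ℝ => -(k * (y + 1))) (-k) y := by
        have h9 := ((hasDerivAt_id y).add_const 1).const_mul (-k)
        have e9 : (fun y : ℝ => -(k * (y + 1))) = fun y : ℝ => -k * (id y + 1) := by
          funext y; simp
        rw [e9]
        exact h9.congr_deriv (by ring)
      exact h.exp.congr_deriv (by ring))
    have hμ2 : μ - 1 ≠ 0 := sub_ne_zero.2 hμ1
    have k2 := bd (fun y => Real.exp (-(k * (y + 1)))) ((μ - 1) * k) (-((1 + μ) * k))
      (mul_ne_zero hμ2 hk.ne')
      (by fun_prop) (fun y => (Real.exp_pos _).le) (fun y => by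
        rw [← Real.exp_add]; congr 1; ring)
    unfold lm
    rw [k1]
    have e0 : Real.exp ((μ - 1) * k + -((1 + μ) * k)) = Real.exp (-(2 * k)) := by
      congr 1; ring
    have e1 : Real.exp (-((μ - 1) * k) + -((1 + μ) * k)) = Real.exp (-(2 * μ * k)) := by
      congr 1; ring
    rw [e0, e1] at k2
    set J := ∫ y in (-1:ℝ)..1, g y * ((Real.exp (-(k * (y + 1))) : ℝ) : ℂ)
    have n0 : ‖g 1 * ((Real.exp (-(k * (1 + 1))) : ℝ) : ℂ)‖ ≤ Real.exp (-(2 * k)) := by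
      rw [h1, one_mul, Complex.norm_real, Real.norm_of_nonneg (Real.exp_pos _).le]
      apply Real.exp_le_exp.2
      linarith
    have n1 : ‖g (-1) * ((Real.exp (-(k * (-1 + 1))) : ℝ) : ℂ)‖ ≤ Real.exp (-(2 * μ * k)) := by
      rw [norm_mul, Complex.norm_real, Real.norm_of_nonneg (Real.exp_pos _).le]
      refine (mul_le_mul_of_nonneg_right gm (Real.exp_pos _).le).trans ?_
      rw [← Real.exp_add]
      apply Real.exp_le_exp.2
      linarith
    have n2 : ‖((-k : ℝ):ℂ) * J‖ ≤ (Real.exp (-(2 * k)) - Real.exp (-(2 * μ * k))) / (μ - 1) := by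
      rw [norm_mul, Complex.norm_real, norm_neg, Real.norm_of_nonneg hk.le]
      refine (mul_le_mul_of_nonneg_left k2 hk.le).trans (le_of_eq ?_)
      field_simp
    refine (norm_sub_le _ _).trans ?_
    have := norm_sub_le (g 1 * ((Real.exp (-(k * (1 + 1))) : ℝ) : ℂ))
      (g (-1) * ((Real.exp (-(k * (-1 + 1))) : ℝ) : ℂ))
    generalize g (-1) * ((Real.exp (-(k * (-1 + 1))) : ℝ) : ℂ) = X at n1 this ⊢
    generalize g 1 * ((Real.exp (-(k * (1 + 1))) : ℝ) : ℂ) = X' at n0 this ⊢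
    generalize ((-k:ℝ):ℂ) * J = Y at n2 ⊢
    generalize (Real.exp (-(2 * k)) - Real.exp (-(2 * μ * k))) / (μ - 1) = Z at n2 ⊢
    linarith

theorem exp04 : Real.exp (-0.4) ≤ 0.6711 := by
  have h1 : Real.exp (0.4) ^ 5 = Real.exp 1 ^ 2 := by
    rw [← Real.exp_nat_mul, ← Real.exp_nat_mul]; norm_num
  have h2 := Real.exp_one_gt_d9
  have h3 : (1.4903:ℝ) ≤ Real.exp 0.4 := by
    by_contra h
    push Not at h
    have h4 : Real.exp (0.4) ^ 5 < 1.4903 ^ 5 := pow_lt_pow_left₀ h (Real.exp_pos _).le (by norm_num)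
    rw [h1] at h4
    have : (2.718:ℝ) ^ 2 ≤ Real.exp 1 ^ 2 := pow_le_pow_left₀ (by norm_num) (by linarith) 2
    norm_num at h4 this
    linarith
  rw [Real.exp_neg]
  exact (inv_anti₀ (by norm_num) h3).trans (by norm_num)

theorem layer_est {k L lam : ℝ} (hk : 1 ≤ k) (hkL : k ≤ L) (hcase : 6 * k ≤ L ∨ 8 ≤ k)
    {V g : ℝ → ℂ} (hV : Continuous V) (hl : Layer L lam V g) :
    0.15 ≤ ‖lp k V‖ ∧ ‖lm k V‖ ≤ 0.9 * ‖lp k V‖ ∧ ‖lm k V‖ ≤ 6 * Real.exp (-(0.4 * k)) ∧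
      ‖lp k V‖ ≤ 500 := by
  have hk0 : 0 < k := by linarith
  set x := Real.exp (-(0.4 * k)) with hx
  have hx0 : 0 < x := Real.exp_pos _
  have hpow : ∀ n : ℕ, Real.exp (-(0.4 * n * k)) = x ^ n := by
    intro n
    rw [hx, ← Real.exp_nat_mul]; congr 1; ring
  have hx1 : x ≤ 0.6711 := by
    refine le_trans ?_ exp04
    apply Real.exp_le_exp.2
    linarith
  have hup : ‖lp k V‖ ≤ 500 := by
    refine le_trans ?_ hl.l1
    unfold lp
    refine intervalIntegral.norm_integral_le_of_norm_le (by norm_num) ?_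
      (hV.norm.intervalIntegrable _ _)
    refine Filter.Eventually.of_forall fun y hy => ?_
    rw [norm_mul, Complex.norm_real, Real.norm_of_nonneg (Real.exp_pos _).le]
    refine mul_le_of_le_one_right (norm_nonneg _) ?_
    apply Real.exp_le_one_iff.2
    nlinarith [hy.2]
  rcases hcase with h6 | h8
  · obtain ⟨a1, a2⟩ := AB (k := k) (μ := 1.2) hk0 (by norm_num) (by norm_num) hV hl.d hl.one (by
      intro y hy
      refine (hl.dec y hy).trans (Real.exp_le_exp.2 ?_)
      have : 0 ≤ 1 - y := by linarith [hy.2]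
      nlinarith)
    have p1 : Real.exp (-(2 * (1 + 1.2) * k)) = x ^ 11 := by
      rw [← hpow]; congr 1; push_cast; ring
    have p2 : Real.exp (-(2 * k)) = x ^ 5 := by
      rw [← hpow]; congr 1; push_cast; ring
    have p3 : Real.exp (-(2 * 1.2 * k)) = x ^ 6 := by
      rw [← hpow]; congr 1; push_cast; ring
    rw [p1] at a1
    rw [p2, p3] at a2
    have q1 : x ^ 11 ≤ 0.6711 ^ 11 := pow_le_pow_left₀ hx0.le hx1 11
    have q2 : x ^ 4 ≤ 0.6711 ^ 4 := pow_le_pow_left₀ hx0.le hx1 4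
    have q3 : x * (6 - 4 * x) ≤ 2.226 := by nlinarith
    have q4 : 0 ≤ x * (6 - 4 * x) := mul_nonneg hx0.le (by linarith)
    have hA : 0.53 ≤ ‖lp k V‖ := by
      refine le_trans ?_ a1
      norm_num at q1 ⊢
      linarith
    have hBe : ‖lm k V‖ ≤ x ^ 4 * (x * (6 - 4 * x)) := by
      refine a2.trans (le_of_eq ?_)
      norm_num
      ring
    have hB : ‖lm k V‖ ≤ 0.46 := by
      refine hBe.trans ?_
      have := mul_le_mul q2 q3 q4 (by norm_num)
      norm_num at this ⊢
      linarith
    refine ⟨by linarith, by linarith, hBe.trans ?_, hup⟩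
    have : x ^ 4 ≤ 1 := pow_le_one₀ hx0.le (by linarith)
    have h9 : x * (6 - 4 * x) ≤ 6 * x := by nlinarith
    calc x ^ 4 * (x * (6 - 4 * x)) ≤ 1 * (x * (6 - 4 * x)) := mul_le_mul_of_nonneg_right this q4
      _ ≤ _ := by linarith
  · obtain ⟨a1, a2⟩ := AB (k := k) (μ := 0.2) hk0 (by norm_num) (by norm_num) hV hl.d hl.one (by
      intro y hy
      refine (hl.dec y hy).trans (Real.exp_le_exp.2 ?_)
      have : 0 ≤ 1 - y := by linarith [hy.2]
      nlinarith)
    have p1 : Real.exp (-(2 * (1 + 0.2) * k)) = x ^ 6 := by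
      rw [← hpow]; congr 1; push_cast; ring
    have p2 : Real.exp (-(2 * k)) = x ^ 5 := by
      rw [← hpow]; congr 1; push_cast; ring
    have p3 : Real.exp (-(2 * 0.2 * k)) = x := by
      rw [hx]; congr 1; ring
    rw [p1] at a1
    rw [p2, p3] at a2
    have hx2 : x ≤ 0.0412 := by
      have e1 : x ≤ Real.exp (-0.4) ^ 8 := by
        rw [← Real.exp_nat_mul]
        apply Real.exp_le_exp.2
        push_cast
        linarith
      have e2 : Real.exp (-0.4) ^ 8 ≤ 0.6711 ^ 8 := pow_le_pow_left₀ (Real.exp_pos _).le exp04 8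
      norm_num at e2 ⊢
      linarith
    have q1 : x ^ 6 ≤ 0.0412 ^ 6 := pow_le_pow_left₀ hx0.le hx2 6
    have q5 : 0 ≤ x ^ 5 := by positivity
    have hA : 0.15 ≤ ‖lp k V‖ := by
      refine le_trans ?_ a1
      norm_num at q1 ⊢
      linarith
    have hBe : ‖lm k V‖ ≤ 2.25 * x := by
      refine a2.trans ?_
      norm_num
      linarith
    refine ⟨hA, by linarith, by linarith, hup⟩

end OS


namespace OS

/-- solving the linear system -/
theorem solve2 {A1 A2 B1 B2 : ℂ} {E x : ℝ} (hE0 : 0 ≤ E) (hEx : E ≤ x) (hx1 : x ≤ 1)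
    (a1 : 0.15 ≤ ‖A1‖) (a2 : 0.15 ≤ ‖A2‖) (b1 : ‖B1‖ ≤ 0.9 * ‖A1‖) (b2 : ‖B2‖ ≤ 0.9 * ‖A2‖)
    (u1 : ‖A1‖ ≤ 500) (u2 : ‖A2‖ ≤ 500) (x1 : ‖B1‖ ≤ 6 * x) :
    ∃ α β : ℂ, α * A1 + β * B2 = 1 ∧ α * B1 + β * A2 = E ∧ ‖α‖ ≤ 240000 ∧ ‖β‖ ≤ 125000 * x := by
  have hdet : 0.004275 ≤ ‖A1 * A2 - B1 * B2‖ := by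
    have h1 := norm_sub_norm_le (A1 * A2) (B1 * B2)
    rw [norm_mul, norm_mul] at h1
    have h2 : ‖B1‖ * ‖B2‖ ≤ (0.9 * ‖A1‖) * (0.9 * ‖A2‖) :=
      mul_le_mul b1 b2 (norm_nonneg _) (by positivity)
    have h3 : (0.15:ℝ) * 0.15 ≤ ‖A1‖ * ‖A2‖ := mul_le_mul a1 a2 (by norm_num) (by positivity)
    nlinarith
  have hdp : 0 < ‖A1 * A2 - B1 * B2‖ := by linarith
  have hne : A1 * A2 - B1 * B2 ≠ 0 := norm_pos_iff.1 hdp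
  refine ⟨(A2 - B2 * E) / (A1 * A2 - B1 * B2), (A1 * E - B1) / (A1 * A2 - B1 * B2), ?_, ?_, ?_, ?_⟩
  · rw [div_mul_eq_mul_div, div_mul_eq_mul_div, ← add_div, div_eq_iff hne]; ring
  · rw [div_mul_eq_mul_div, div_mul_eq_mul_div, ← add_div, div_eq_iff hne]; ring
  · rw [norm_div, div_le_iff₀ hdp]
    have h1 := norm_sub_le A2 (B2 * E)
    rw [norm_mul, Complex.norm_real, Real.norm_of_nonneg hE0] at h1
    have h2 : ‖B2‖ * E ≤ ‖B2‖ := mul_le_of_le_one_right (norm_nonneg _) (by linarith)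
    linarith
  · rw [norm_div, div_le_iff₀ hdp]
    have h1 := norm_sub_le (A1 * E) B1
    rw [norm_mul, Complex.norm_real, Real.norm_of_nonneg hE0] at h1
    have h2 : ‖A1‖ * E ≤ 500 * x := mul_le_mul u1 hEx hE0 (by norm_num)
    have h3 : 125000 * x * 0.004275 ≤ 125000 * x * ‖A1 * A2 - B1 * B2‖ :=
      mul_le_mul_of_nonneg_left hdet (by linarith)
    linarith

theorem core_sup {L k lam x y : ℝ} (hk : 1 ≤ k) (hkL : k ≤ L) (hx : x = Real.exp (-(0.4 * k)))
    (hy : y ∈ Set.Icc (-1:ℝ) 1) :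
    L * Real.sqrt (1 + L * |y - lam|) * Real.exp (-(0.2 * L * (1 - y)))
        ≤ 5 * Real.sqrt (L ^ 3 / k + L ^ 3 * |1 - lam|) ∧
    x * (L * Real.sqrt (1 + L * |y - lam|)) ≤ 2 * Real.sqrt (L ^ 3 / k + L ^ 3 * |1 - lam|) := by
  have hk0 : 0 < k := by linarith
  have hL0 : 0 < L := by linarith
  have hx0 : 0 < x := by rw [hx]; exact Real.exp_pos _
  have hp := abs_nonneg (1 - lam)
  have hp' := abs_nonneg (y - lam)
  have t1 : |y - lam| ≤ (1 - y) + |1 - lam| := by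
    have := abs_sub_le y 1 lam
    rwa [abs_sub_comm y 1, abs_of_nonneg (by linarith [hy.2] : 0 ≤ 1 - y)] at this
  have hz : 0 ≤ L * (1 - y) := mul_nonneg hL0.le (by linarith [hy.2])
  have t2 : L ^ 2 ≤ L ^ 3 / k := by
    rw [le_div_iff₀ hk0]; nlinarith [sq_nonneg L]
  set T2 := L ^ 3 / k + L ^ 3 * |1 - lam| with hT2
  have hLpos : 0 ≤ L ^ 3 * |1 - lam| := by positivity
  have hT0 : 0 ≤ T2 := by positivity
  have t3 := mul_le_mul_of_nonneg_left t1 hL0.le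
  have hLp : 0 ≤ L * |1 - lam| := by positivity
  constructor
  · set e := Real.exp (-(0.2 * L * (1 - y))) with he
    have he0 : 0 < e := Real.exp_pos _
    have hez : (1 + L * (1 - y)) * e ^ 2 ≤ 25 := by
      have h1 := Real.add_one_le_exp (0.2 * L * (1 - y))
      have h2 : e * Real.exp (0.2 * L * (1 - y)) = 1 := by
        rw [he, ← Real.exp_add]; simp
      have h3 : (1 + 0.2 * (L * (1 - y))) * e ≤ 1 := by
        refine le_trans ?_ h2.le
        rw [mul_comm e]
        exact mul_le_mul_of_nonneg_right (by linarith) he0.le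
      have h4 : e ≤ 1 := by nlinarith
      have h5 : (1 + L * (1 - y)) * e ≤ 5 := by nlinarith
      nlinarith
    have h1 : (L * Real.sqrt (1 + L * |y - lam|) * e) ^ 2 ≤ (5 * Real.sqrt T2) ^ 2 := by
      rw [mul_pow, mul_pow, mul_pow, Real.sq_sqrt (by positivity), Real.sq_sqrt hT0]
      have h2 : 1 + L * |y - lam| ≤ (1 + L * |1 - lam|) * (1 + L * (1 - y)) := by nlinarith
      calc L ^ 2 * (1 + L * |y - lam|) * e ^ 2
          ≤ L ^ 2 * ((1 + L * |1 - lam|) * (1 + L * (1 - y))) * e ^ 2 := by gcongr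
        _ = (L ^ 2 + L ^ 3 * |1 - lam|) * ((1 + L * (1 - y)) * e ^ 2) := by ring
        _ ≤ (L ^ 2 + L ^ 3 * |1 - lam|) * 25 := by gcongr
        _ ≤ 5 ^ 2 * T2 := by rw [hT2]; linarith
    exact (abs_le_of_sq_le_sq' h1 (by positivity)).2
  · have h1 : (x * (L * Real.sqrt (1 + L * |y - lam|))) ^ 2 ≤ (2 * Real.sqrt T2) ^ 2 := by
      rw [mul_pow, mul_pow, mul_pow, Real.sq_sqrt (by positivity), Real.sq_sqrt hT0]
      have h2 : 1 + L * |y - lam| ≤ 3 * L + L * |1 - lam| := by nlinarith [hy.1]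
      have h3 : L ^ 2 * (3 * L + L * |1 - lam|) ≤ 3 * k * T2 := by
        have e1 : 3 * k * T2 = 3 * L ^ 3 + 3 * k * (L ^ 3 * |1 - lam|) := by
          rw [hT2]; field_simp
        rw [e1]
        nlinarith
      have h4 : x ^ 2 * (3 * k) ≤ 4 := by
        have g1 := Real.add_one_le_exp (0.8 * k)
        have g2 : x ^ 2 * Real.exp (0.8 * k) = 1 := by
          rw [hx, ← Real.exp_nat_mul, ← Real.exp_add, ← Real.exp_zero]; congr 1; push_cast; ring
        have g3 : x ^ 2 * (0.8 * k + 1) ≤ 1 := by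
          exact (mul_le_mul_of_nonneg_left g1 (by positivity)).trans g2.le
        nlinarith [sq_nonneg x]
      calc x ^ 2 * (L ^ 2 * (1 + L * |y - lam|)) ≤ x ^ 2 * (L ^ 2 * (3 * L + L * |1 - lam|)) := by gcongr
        _ ≤ x ^ 2 * (3 * k * T2) := by gcongr
        _ = x ^ 2 * (3 * k) * T2 := by ring
        _ ≤ 2 ^ 2 * T2 := by
          have := mul_le_mul_of_nonneg_right h4 hT0
          linarith
    exact (abs_le_of_sq_le_sq' h1 (by positivity)).2

theorem inj2 {E : ℝ} (hE0 : 0 ≤ E) (hE1 : E < 1) {p q : ℂ} (h1 : p * 1 + q * (-E) = 0)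
    (h2 : p * E + q * (-1) = 0) : p = 0 ∧ q = 0 := by
  have e1 : p = q * E := by linear_combination h1
  have e2 : q * (1 - (E:ℂ) ^ 2) = 0 := by rw [e1] at h2; linear_combination -h2
  have hne : (1 - (E:ℂ) ^ 2) ≠ 0 := by
    have : (1 - E ^ 2) ≠ 0 := by nlinarith
    exact_mod_cast this
  have hq : q = 0 := by
    rcases mul_eq_zero.1 e2 with h | h
    · exact h
    · exact absurd h hne
  exact ⟨by rw [e1, hq]; ring, hq⟩

set_option maxHeartbeats 1000000 in
theorem core {L c lam k : ℝ} (hk : 1 ≤ k) (hkL : k ≤ L) (hcase : 6 * k ≤ L ∨ 8 ≤ k)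
    (hc0 : -0.02 ≤ c) (hc1 : c ≤ 1) {w1 v1 w2 v2 : ℝ → ℂ}
    (h1 : Sol L c lam w1 v1) (h2 : Sol L c lam w2 v2)
    (p1 : lp k w1 = 1) (m1 : lm k w1 = (Real.exp (-(2 * k)) : ℝ))
    (p2 : lp k w2 = -(Real.exp (-(2 * k)) : ℝ)) (m2 : lm k w2 = -1) :
    (∫ y in (-1:ℝ)..1, ‖w1 y‖ ≤ 200000000) ∧ ∀ y ∈ Set.Icc (-1:ℝ) 1,
      ‖w1 y‖ ≤ 200000000 * Real.sqrt (L ^ 3 / k + L ^ 3 * |1 - lam|) := by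
  have hk0 : 0 < k := by linarith
  have hL1 : 1 ≤ L := by linarith
  set E := Real.exp (-(2 * k)) with hE
  set x := Real.exp (-(0.4 * k)) with hx
  have hE0 : 0 < E := Real.exp_pos _
  have hx0 : 0 < x := Real.exp_pos _
  have hx1 : x ≤ 1 := Real.exp_le_one_iff.2 (by linarith)
  have hE1 : E < 1 := Real.exp_lt_one_iff.2 (by linarith)
  have hEx : E ≤ x := Real.exp_le_exp.2 (by linarith)
  have hnd : ∀ a b : ℂ, (∀ y ∈ Set.Icc (-1:ℝ) 1, a * w1 y + b * w2 y = 0) → a = 0 ∧ b = 0 := by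
    intro a b h
    have q1 := lp_zero k h
    have q2 := lm_zero k h
    rw [lp_comb k h1.cont h2.cont, p1, p2] at q1
    rw [lm_comb k h1.cont h2.cont, m1, m2] at q2
    exact inj2 hE0.le hE1 q1 q2
  have hnd' : ∀ a b : ℂ, (∀ y ∈ Set.Icc (-1:ℝ) 1, a * rf w1 y + b * rf w2 y = 0) → a = 0 ∧ b = 0 := by
    intro a b h
    obtain ⟨q1, q2⟩ := hnd ((starRingEnd ℂ) a) ((starRingEnd ℂ) b) (by
      intro y hy
      have := h (-y) ⟨by linarith [hy.2], by linarith [hy.1]⟩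
      simp only [rf, neg_neg] at this
      have := congrArg (starRingEnd ℂ) this
      simpa using this)
    exact ⟨by simpa using q1, by simpa using q2⟩
  obtain ⟨a, b, g, hlay⟩ := layer hL1 hc0 hc1 h1 h2 hnd
  obtain ⟨a', b', g', hlay'⟩ := layer hL1 hc0 hc1 h1.refl h2.refl hnd'
  have hVc := (h1.comb h2 a b).cont
  have hUc := (h1.refl.comb h2.refl a' b').cont
  have est := layer_est hk hkL hcase hVc hlay
  have est' := layer_est hk hkL hcase hUc hlay'
  set V1 : ℝ → ℂ := fun y => a * w1 y + b * w2 y with hV1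
  set U : ℝ → ℂ := fun y => a' * rf w1 y + b' * rf w2 y with hU
  set V2 : ℝ → ℂ := fun y => (starRingEnd ℂ) a' * w1 y + (starRingEnd ℂ) b' * w2 y with hV2
  have hV2U : V2 = rf U := by
    funext y; simp [hV2, hU, rf]
  have hUV : U = rf V2 := by rw [hV2U, rf_rf]
  have hV2c : Continuous V2 := (h1.comb h2 _ _).cont
  rw [hUV, lp_rf, lm_rf, RCLike.norm_conj, RCLike.norm_conj] at est'
  obtain ⟨s1, s2, s3, s4⟩ := est
  obtain ⟨r1, r2, r3, r4⟩ := est'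
  obtain ⟨α, β, z1, z2, hα, hβ⟩ := solve2 hE0.le hEx hx1 s1 r1 s2 r2 s4 r4 s3
  have lpV1 : lp k V1 = a * 1 + b * (-E) := by rw [hV1, lp_comb k h1.cont h2.cont, p1, p2]
  have lmV1 : lm k V1 = a * E + b * (-1) := by rw [hV1, lm_comb k h1.cont h2.cont, m1, m2]
  have lpV2 : lp k V2 = (starRingEnd ℂ) a' * 1 + (starRingEnd ℂ) b' * (-E) := by
    rw [hV2, lp_comb k h1.cont h2.cont, p1, p2]
  have lmV2 : lm k V2 = (starRingEnd ℂ) a' * E + (starRingEnd ℂ) b' * (-1) := by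
    rw [hV2, lm_comb k h1.cont h2.cont, m1, m2]
  rw [lpV1, lpV2] at z1
  rw [lmV1, lmV2] at z2
  obtain ⟨y1, y2⟩ := inj2 (E := E) (p := 1 - α * a - β * (starRingEnd ℂ) a')
    (q := - α * b - β * (starRingEnd ℂ) b') hE0.le hE1 (by linear_combination -z1)
    (by linear_combination -z2)
  have hw : ∀ y, w1 y = α * V1 y + β * V2 y := by
    intro y
    simp only [hV1, hV2]
    linear_combination w1 y * y1 + w2 y * y2
  have hβ1 : ‖β‖ ≤ 125000 := hβ.trans (by linarith)
  constructor
  · have i1 := hVc.norm.intervalIntegrable (μ := MeasureTheory.volume) (-1) 1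
    have i2 := hV2c.norm.intervalIntegrable (μ := MeasureTheory.volume) (-1) 1
    have e1 : ∫ y in (-1:ℝ)..1, ‖w1 y‖ ≤ ∫ y in (-1:ℝ)..1, (‖α‖ * ‖V1 y‖ + ‖β‖ * ‖V2 y‖) := by
      refine intervalIntegral.integral_mono_on (by norm_num) (h1.cont.norm.intervalIntegrable _ _)
        ((i1.const_mul _).add (i2.const_mul _)) fun y _ => ?_
      rw [hw y]
      refine (norm_add_le _ _).trans ?_
      rw [norm_mul, norm_mul]
    rw [intervalIntegral.integral_add (i1.const_mul _) (i2.const_mul _),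
      intervalIntegral.integral_const_mul, intervalIntegral.integral_const_mul] at e1
    have e2 := hlay.l1
    have e3 : ∫ y in (-1:ℝ)..1, ‖V2 y‖ ≤ 500 := by
      have := hlay'.l1
      rw [hUV] at this
      rwa [int_rf] at this
    have e4 := mul_le_mul hα e2 (intervalIntegral.integral_nonneg (by norm_num) fun y _ => norm_nonneg _)
      (by norm_num)
    have e5 := mul_le_mul hβ1 e3 (intervalIntegral.integral_nonneg (by norm_num) fun y _ => norm_nonneg _)
      (by norm_num)
    linarith
  · intro y hy
    obtain ⟨t1, t2⟩ := core_sup (lam := lam) hk hkL hx hy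
    set T := Real.sqrt (L ^ 3 / k + L ^ 3 * |1 - lam|)
    have hT : 0 ≤ T := Real.sqrt_nonneg _
    have n1 := hlay.sup y hy
    have hyn : -y ∈ Set.Icc (-1:ℝ) 1 := ⟨by linarith [hy.2], by linarith [hy.1]⟩
    have n2 := hlay'.sup (-y) hyn
    have e1 : ‖U (-y)‖ = ‖V2 y‖ := by rw [hV2U]; simp [rf]
    have e2 : |(-y) - (-lam)| = |y - lam| := by rw [← abs_neg]; congr 1; ring
    have e3 : Real.exp (-(0.2 * L * (1 - -y))) ≤ 1 := by
      apply Real.exp_le_one_iff.2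
      have := mul_nonneg (by linarith : 0 ≤ L) (by linarith [hy.1] : 0 ≤ 1 + y)
      linarith
    have n1' : ‖V1 y‖ ≤ 500 * T := by
      refine n1.trans ?_
      linarith
    have n2' : ‖V2 y‖ ≤ 100 * (L * Real.sqrt (1 + L * |y - lam|)) := by
      rw [← e1]
      refine n2.trans ?_
      rw [e2]
      refine (mul_le_of_le_one_right (by positivity) e3).trans (by linarith)
    have f1 : ‖α‖ * ‖V1 y‖ ≤ 240000 * (500 * T) := mul_le_mul hα n1' (norm_nonneg _) (by norm_num)
    have f2 : ‖β‖ * ‖V2 y‖ ≤ (125000 * x) * (100 * (L * Real.sqrt (1 + L * |y - lam|))) :=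
      mul_le_mul hβ n2' (norm_nonneg _) (by positivity)
    rw [hw y]
    refine (norm_add_le _ _).trans ?_
    rw [norm_mul, norm_mul]
    nlinarith

end OS


namespace OS

/-- A stream function with its vorticity; `s = ±1` is the sign of the wave number. -/
structure Data (K L c lam s : ℝ) (φ d w v : ℝ → ℂ) : Prop where
  p1 : ∀ y, HasDerivAt φ (d y) y
  p2 : ∀ y, HasDerivAt d (w y + (K:ℂ) ^ 2 * φ y) y
  cont : Continuous w
  d1 : ∀ y ∈ Set.Icc (-1:ℝ) 1, HasDerivAt w (v y) y
  d2 : ∀ y ∈ Set.Icc (-1:ℝ) 1, HasDerivAt v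
    (((L:ℂ) ^ 2 * (c:ℂ) + (s:ℂ) * Complex.I * (L:ℂ) ^ 3 * ((y:ℂ) - (lam:ℂ))) * w y) y
  bm : φ (-1) = 0
  bp : φ 1 = 0

theorem Data.conj {K L c lam s : ℝ} {φ d w v : ℝ → ℂ} (h : Data K L c lam s φ d w v) :
    Data K L c lam (-s) (fun y => (starRingEnd ℂ) (φ y)) (fun y => (starRingEnd ℂ) (d y))
      (fun y => (starRingEnd ℂ) (w y)) (fun y => (starRingEnd ℂ) (v y)) := by
  refine ⟨fun y => hasDerivAt_conj (h.p1 y), fun y => ?_, Complex.continuous_conj.comp h.cont,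
    fun y hy => hasDerivAt_conj (h.d1 y hy), fun y hy => ?_, ?_, ?_⟩
  · refine (hasDerivAt_conj (h.p2 y)).congr_deriv ?_
    simp
  · refine (hasDerivAt_conj (h.d2 y hy)).congr_deriv ?_
    simp
  · simp [h.bm]
  · simp [h.bp]

theorem Data.sol {K L c lam : ℝ} {φ d w v : ℝ → ℂ} (h : Data K L c lam 1 φ d w v) :
    Sol L c lam w v :=
  ⟨h.cont, h.d1, fun y hy => (h.d2 y hy).congr_deriv (by push_cast; ring)⟩

theorem Data.ell {K L c lam s : ℝ} {φ d w v : ℝ → ℂ} (h : Data K L c lam s φ d w v) :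
    lp K w = d 1 - d (-1) * (Real.exp (-(2 * K)) : ℝ) ∧
    lm K w = d 1 * (Real.exp (-(2 * K)) : ℝ) - d (-1) := by
  have hw := h.cont
  constructor
  · have he : ∀ y : ℝ, HasDerivAt (fun y : ℝ => Real.exp (K * (y - 1)))
        (K * Real.exp (K * (y - 1))) y := fun y => by
      have h : HasDerivAt (fun y : ℝ => K * (y - 1)) K y := by
        simpa using ((hasDerivAt_id y).sub_const 1).const_mul K
      exact h.exp.congr_deriv (by ring)
    unfold lp
    rw [intervalIntegral.integral_eq_sub_of_hasDerivAt
      (f := fun y => (d y - (K:ℂ) * φ y) * ((Real.exp (K * (y - 1)) : ℝ) : ℂ))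
      (fun y _ => ?_) (Continuous.intervalIntegrable (by fun_prop) _ _)]
    · rw [h.bm, h.bp, show K * (1 - 1) = 0 by ring, show K * (-1 - 1) = -(2 * K) by ring,
        Real.exp_zero]
      push_cast
      ring
    · refine (((h.p2 y).sub ((h.p1 y).const_mul (K:ℂ))).mul (he y).ofReal_comp).congr_deriv ?_
      simp only [Pi.sub_apply, Pi.add_apply]
      push_cast
      ring
  · have he : ∀ y : ℝ, HasDerivAt (fun y : ℝ => Real.exp (-(K * (y + 1))))
        (-K * Real.exp (-(K * (y + 1)))) y := fun y => by
      have h : HasDerivAt (fun y : ℝ => -(K * (y + 1))) (-K) y := by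
        have h9 := ((hasDerivAt_id y).add_const 1).const_mul (-K)
        have e9 : (fun y : ℝ => -(K * (y + 1))) = fun y : ℝ => -K * (id y + 1) := by
          funext y; simp
        rw [e9]
        exact h9.congr_deriv (by ring)
      exact h.exp.congr_deriv (by ring)
    unfold lm
    rw [intervalIntegral.integral_eq_sub_of_hasDerivAt
      (f := fun y => (d y + (K:ℂ) * φ y) * ((Real.exp (-(K * (y + 1))) : ℝ) : ℂ))
      (fun y _ => ?_) (Continuous.intervalIntegrable (by fun_prop) _ _)]
    · rw [h.bm, h.bp, show -(K * (1 + 1)) = -(2 * K) by ring, show -(K * (-1 + 1)) = 0 by ring,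
        Real.exp_zero]
      push_cast
      ring
    · refine (((h.p2 y).add ((h.p1 y).const_mul (K:ℂ))).mul (he y).ofReal_comp).congr_deriv ?_
      simp only [Pi.sub_apply, Pi.add_apply]
      push_cast
      ring

theorem both {K L c lam : ℝ} (hk : 1 ≤ K) (hkL : K ≤ L) (hcase : 6 * K ≤ L ∨ 8 ≤ K)
    (hc0 : -0.02 ≤ c) (hc1 : c ≤ 1) {φ1 d1 w1 v1 φ2 d2 w2 v2 : ℝ → ℂ}
    (h1 : Data K L c lam 1 φ1 d1 w1 v1) (h2 : Data K L c lam 1 φ2 d2 w2 v2)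
    (b1 : d1 1 = 1) (b2 : d1 (-1) = 0) (b3 : d2 1 = 0) (b4 : d2 (-1) = 1) :
    ((∫ y in (-1:ℝ)..1, ‖w1 y‖ ≤ 200000000) ∧ ∀ y ∈ Set.Icc (-1:ℝ) 1,
      ‖w1 y‖ ≤ 200000000 * Real.sqrt (L ^ 3 / K + L ^ 3 * |1 - lam|)) ∧
    ((∫ y in (-1:ℝ)..1, ‖w2 y‖ ≤ 200000000) ∧ ∀ y ∈ Set.Icc (-1:ℝ) 1,
      ‖w2 y‖ ≤ 200000000 * Real.sqrt (L ^ 3 / K + L ^ 3 * |1 + lam|)) := by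
  obtain ⟨p1, m1⟩ := h1.ell
  obtain ⟨p2, m2⟩ := h2.ell
  rw [b1, b2] at p1 m1
  rw [b3, b4] at p2 m2
  have p1' : lp K w1 = 1 := by rw [p1]; ring
  have m1' : lm K w1 = (Real.exp (-(2 * K)) : ℝ) := by rw [m1]; ring
  have p2' : lp K w2 = -(Real.exp (-(2 * K)) : ℝ) := by rw [p2]; ring
  have m2' : lm K w2 = -1 := by rw [m2]; ring
  refine ⟨core hk hkL hcase hc0 hc1 h1.sol h2.sol p1' m1' p2' m2', ?_⟩
  have s1 := h1.sol.refl
  have s2 := h2.sol.refl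
  obtain ⟨r1, r2⟩ := core hk hkL hcase hc0 hc1 (s2.comb s1 (-1) 0) (s1.comb s2 (-1) 0)
    (by rw [lp_comb K s2.cont s1.cont, lp_rf, m2']; simp)
    (by rw [lm_comb K s2.cont s1.cont, lm_rf, p2', map_neg, Complex.conj_ofReal]; simp)
    (by rw [lp_comb K s1.cont s2.cont, lp_rf, m1', Complex.conj_ofReal]; simp)
    (by rw [lm_comb K s1.cont s2.cont, lm_rf, p1']; simp)
  have e : ∀ y, ‖-1 * rf w2 y + 0 * rf w1 y‖ = ‖rf w2 y‖ := fun y => by simp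
  simp only [e, sub_neg_eq_add] at r1 r2
  rw [int_rf] at r1
  refine ⟨r1, fun y hy => ?_⟩
  have := r2 (-y) ⟨by linarith [hy.2], by linarith [hy.1]⟩
  simpa [rf] using this

theorem mkData {ν lam ε L c s : ℝ} {k : ℤ} {φ w : ℝ → ℂ} (hν : 0 < ν)
    (hs : (k:ℝ) = s * |(k:ℝ)|) (hL3 : L ^ 3 * ν = |(k:ℝ)|) (hc : L ^ 2 * c = |(k:ℝ)| ^ 2 - ε * L ^ 2)
    (hco : ε * ν ^ ((1:ℝ)/3) * |(k:ℝ)| ^ ((2:ℝ)/3) = ε * (ν * L ^ 2))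
    (hφ : ContDiff ℝ 4 φ) (bm : φ (-1) = 0) (bp : φ 1 = 0)
    (hw : w = fun y : ℝ => deriv (deriv φ) y - (k:ℂ)^2 * φ y)
    (heq : ∀ y ∈ Set.Icc (-1:ℝ) 1,
          -(ν : ℂ) * (deriv (deriv w) y - (k:ℂ)^2 * w y)
            + Complex.I * (k:ℂ) * ((y:ℂ) - (lam:ℂ)) * w y
            - ((ε * ν ^ ((1:ℝ)/3) * |(k:ℝ)| ^ ((2:ℝ)/3) : ℝ) : ℂ) * w y = 0) :
    Data |(k:ℝ)| L c lam s φ (deriv φ) w (deriv w) := by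
  have hφ1 : ContDiff ℝ 3 (deriv φ) := ContDiff.iterate_deriv' 3 1 (by exact_mod_cast hφ)
  have hφ2 : ContDiff ℝ 2 (deriv (deriv φ)) := ContDiff.iterate_deriv' 2 1 (by exact_mod_cast hφ1)
  have hwd : ContDiff ℝ 2 w := by
    rw [hw]
    exact hφ2.sub (contDiff_const.mul (hφ.of_le (by norm_num)))
  have hwd1 : ContDiff ℝ 1 (deriv w) := ContDiff.iterate_deriv' 1 1 (by exact_mod_cast hwd)
  have hk2 : ((|(k:ℝ)| : ℝ):ℂ) ^ 2 = (k:ℂ) ^ 2 := by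
    have : |(k:ℝ)| ^ 2 = (k:ℝ) ^ 2 := sq_abs _
    exact_mod_cast this
  have hνc : (ν:ℂ) ≠ 0 := by exact_mod_cast hν.ne'
  refine ⟨fun y => ((hφ.differentiable (by norm_num)) y).hasDerivAt, fun y => ?_, hwd.continuous,
    fun y _ => ((hwd.differentiable (by norm_num)) y).hasDerivAt, fun y hy => ?_, bm, bp⟩
  · refine ((hφ1.differentiable (by norm_num)) y).hasDerivAt.congr_deriv ?_
    rw [hk2, hw]; ring
  · refine ((hwd1.differentiable (by norm_num)) y).hasDerivAt.congr_deriv ?_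
    have h := heq y hy
    rw [hco] at h
    have hsc : (k:ℂ) = (s:ℂ) * ((|(k:ℝ)| : ℝ):ℂ) := by
      rw [← Complex.ofReal_mul, ← hs]; simp
    have hL3c : (L:ℂ) ^ 3 * (ν:ℂ) = ((|(k:ℝ)| : ℝ):ℂ) := by exact_mod_cast hL3
    have hcc : (L:ℂ) ^ 2 * (c:ℂ) = ((|(k:ℝ)| : ℝ):ℂ) ^ 2 - (ε:ℂ) * (L:ℂ) ^ 2 := by exact_mod_cast hc
    rw [hk2] at hcc
    have hkk : (k:ℂ) = (s:ℂ) * ((L:ℂ) ^ 3 * (ν:ℂ)) := by rw [hL3c]; exact hsc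
    apply mul_left_cancel₀ hνc
    push_cast at h
    rw [hcc]
    have h' : (ν:ℂ) * deriv (deriv w) y = (ν:ℂ) * (k:ℂ) ^ 2 * w y
        + Complex.I * (k:ℂ) * ((y:ℂ) - (lam:ℂ)) * w y - (ε:ℂ) * ((ν:ℂ) * (L:ℂ) ^ 2) * w y := by
      linear_combination -h
    rw [h']
    linear_combination (Complex.I * ((y:ℂ) - (lam:ℂ)) * w y) * hkk

theorem nL1_eq (f : ℝ → ℂ) : (∫ y in Set.Icc (-1:ℝ) 1, ‖f y‖) = ∫ y in (-1:ℝ)..1, ‖f y‖ := by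
  rw [intervalIntegral.integral_of_le (by norm_num), MeasureTheory.integral_Icc_eq_integral_Ioc]

theorem final_aux {ν K L p : ℝ} (hν : 0 < ν) (hK : 1 ≤ K) (hp : 0 ≤ p) (hL3 : L ^ 3 * ν = K) :
    Real.sqrt (L ^ 3 / K + L ^ 3 * p) = ν ^ (-(1:ℝ)/2) * (1 + K * p) ^ ((1:ℝ)/2) := by
  have e1 : L ^ 3 / K + L ^ 3 * p = ν⁻¹ * (1 + K * p) := by
    have : L ^ 3 = K / ν := by field_simp; linarith
    have hK0 : K ≠ 0 := by linarith
    rw [this]; field_simp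
  rw [e1, Real.sqrt_mul (by positivity), Real.sqrt_eq_rpow, Real.sqrt_eq_rpow,
    ← Real.rpow_neg_one, ← Real.rpow_mul hν.le]
  norm_num

end OS

/-- `L^∞` and `L¹` bounds on the vorticities `w₁, w₂` of the solutions of the homogeneous
Orr–Sommerfeld equation. -/
theorem statement7 :
    ∃ k₀ δ₀ C : ℝ, 1 ≤ k₀ ∧ 0 < δ₀ ∧ 0 < C ∧
      ∀ (ν : ℝ) (k : ℤ) (lam ε L : ℝ) (φ₁ φ₂ w₁ w₂ : ℝ → ℂ),
        0 < ν → ν ≤ 1 → 1 ≤ |k| → 0 ≤ ε → ε < δ₀ →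
        L = (|(k:ℝ)| / ν) ^ ((1:ℝ)/3) →
        (L ≥ 6 * |(k:ℝ)| ∨ (L ≥ |(k:ℝ)| ∧ |(k:ℝ)| ≥ k₀)) →
        ContDiff ℝ 4 φ₁ → ContDiff ℝ 4 φ₂ →
        φ₁ (-1) = 0 → φ₁ 1 = 0 → deriv φ₁ 1 = 1 → deriv φ₁ (-1) = 0 →
        φ₂ (-1) = 0 → φ₂ 1 = 0 → deriv φ₂ (-1) = 1 → deriv φ₂ 1 = 0 →
        (w₁ = fun y : ℝ => deriv (deriv φ₁) y - (k:ℂ)^2 * φ₁ y) →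
        (w₂ = fun y : ℝ => deriv (deriv φ₂) y - (k:ℂ)^2 * φ₂ y) →
        (∀ y ∈ Set.Icc (-1:ℝ) 1,
          -(ν : ℂ) * (deriv (deriv w₁) y - (k:ℂ)^2 * w₁ y)
            + Complex.I * (k:ℂ) * ((y:ℂ) - (lam:ℂ)) * w₁ y
            - ((ε * ν ^ ((1:ℝ)/3) * |(k:ℝ)| ^ ((2:ℝ)/3) : ℝ) : ℂ) * w₁ y = 0) →
        (∀ y ∈ Set.Icc (-1:ℝ) 1,
          -(ν : ℂ) * (deriv (deriv w₂) y - (k:ℂ)^2 * w₂ y)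
            + Complex.I * (k:ℂ) * ((y:ℂ) - (lam:ℂ)) * w₂ y
            - ((ε * ν ^ ((1:ℝ)/3) * |(k:ℝ)| ^ ((2:ℝ)/3) : ℝ) : ℂ) * w₂ y = 0) →
        nLinf w₁ ≤ C * ν ^ (-(1:ℝ)/2) * (1 + |(k:ℝ)| * |lam - 1|) ^ ((1:ℝ)/2)
          ∧ nLinf w₂ ≤ C * ν ^ (-(1:ℝ)/2) * (1 + |(k:ℝ)| * |lam + 1|) ^ ((1:ℝ)/2)
          ∧ nL1 w₁ + nL1 w₂ ≤ C := by
  refine ⟨8, 0.02, 400000000, by norm_num, by norm_num, by norm_num, ?_⟩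
  intro ν k lam ε L φ₁ φ₂ w₁ w₂ hν _ hk hε0 hε hL hcase hφ₁ hφ₂ a1 a2 a3 a4 b1 b2 b3 b4 hw₁ hw₂ e1 e2
  have hK1 : 1 ≤ |(k:ℝ)| := by exact_mod_cast hk
  set K := |(k:ℝ)| with hK
  have hK0 : 0 < K := by linarith
  have hKL : K ≤ L := by rcases hcase with h | h <;> [linarith; exact h.1]
  have hL0 : 0 < L := by linarith
  have hcase' : 6 * K ≤ L ∨ 8 ≤ K := by
    rcases hcase with h | h
    · exact Or.inl h
    · exact Or.inr h.2
  have hL3' : L ^ 3 = K / ν := by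
    rw [hL, ← Real.rpow_natCast, ← Real.rpow_mul (by positivity)]
    norm_num
  have hL3 : L ^ 3 * ν = K := by rw [hL3']; field_simp
  have hco : ε * ν ^ ((1:ℝ)/3) * K ^ ((2:ℝ)/3) = ε * (ν * L ^ 2) := by
    have : L ^ 2 = K ^ ((2:ℝ)/3) / ν ^ ((2:ℝ)/3) := by
      rw [hL, ← Real.rpow_natCast, ← Real.rpow_mul (by positivity), ← Real.div_rpow hK0.le hν.le]
      norm_num
    rw [this]
    have hνp : ν = ν ^ ((1:ℝ)/3) * ν ^ ((2:ℝ)/3) := by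
      rw [← Real.rpow_add hν]; norm_num
    have hpos : 0 < ν ^ ((2:ℝ)/3) := Real.rpow_pos_of_pos hν _
    generalize ν ^ ((1:ℝ)/3) = A at *
    generalize ν ^ ((2:ℝ)/3) = B at *
    rw [hνp]
    field_simp
  set c := K ^ 2 / L ^ 2 - ε with hcdef
  have hc : L ^ 2 * c = K ^ 2 - ε * L ^ 2 := by rw [hcdef]; field_simp
  have hc0 : -0.02 ≤ c := by
    have : 0 ≤ K ^ 2 / L ^ 2 := by positivity
    rw [hcdef]; linarith
  have hc1 : c ≤ 1 := by
    have : K ^ 2 / L ^ 2 ≤ 1 := by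
      rw [div_le_one (by positivity)]
      exact pow_le_pow_left₀ hK0.le hKL 2
    rw [hcdef]; linarith
  have main : ((∫ y in (-1:ℝ)..1, ‖w₁ y‖ ≤ 200000000) ∧ ∀ y ∈ Set.Icc (-1:ℝ) 1,
      ‖w₁ y‖ ≤ 200000000 * Real.sqrt (L ^ 3 / K + L ^ 3 * |1 - lam|)) ∧
    ((∫ y in (-1:ℝ)..1, ‖w₂ y‖ ≤ 200000000) ∧ ∀ y ∈ Set.Icc (-1:ℝ) 1,
      ‖w₂ y‖ ≤ 200000000 * Real.sqrt (L ^ 3 / K + L ^ 3 * |1 + lam|)) := by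
    rcases le_total 0 (k:ℝ) with hs | hs
    · have hs' : (k:ℝ) = 1 * |(k:ℝ)| := by rw [abs_of_nonneg hs]; ring
      exact OS.both hK1 hKL hcase' hc0 hc1
        (OS.mkData hν hs' hL3 hc hco hφ₁ a1 a2 hw₁ e1) (OS.mkData hν hs' hL3 hc hco hφ₂ b1 b2 hw₂ e2)
        a3 a4 b4 b3
    · have hs' : (k:ℝ) = (-1) * |(k:ℝ)| := by rw [abs_of_nonpos hs]; ring
      have D1 := (OS.mkData hν hs' hL3 hc hco hφ₁ a1 a2 hw₁ e1).conj
      have D2 := (OS.mkData hν hs' hL3 hc hco hφ₂ b1 b2 hw₂ e2).conj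
      rw [neg_neg] at D1 D2
      have := OS.both hK1 hKL hcase' hc0 hc1 D1 D2 (by simp [a3]) (by simp [a4]) (by simp [b4])
        (by simp [b3])
      simpa only [RCLike.norm_conj] using this
  obtain ⟨⟨i1, s1⟩, i2, s2⟩ := main
  have ne : Nonempty ↥(Set.Icc (-1:ℝ) 1) := ⟨⟨0, by norm_num⟩⟩
  rw [OS.final_aux hν hK1 (abs_nonneg _) hL3] at s1 s2
  rw [abs_sub_comm] at s1
  rw [add_comm 1 lam] at s2
  have pos : ∀ p : ℝ, 0 ≤ p → 0 ≤ ν ^ (-(1:ℝ)/2) * (1 + K * p) ^ ((1:ℝ)/2) := fun p hp => by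
    positivity
  refine ⟨?_, ?_, ?_⟩
  · refine ciSup_le fun y => (s1 y y.2).trans ?_
    have := pos _ (abs_nonneg (lam - 1))
    linarith
  · refine ciSup_le fun y => (s2 y y.2).trans ?_
    have := pos _ (abs_nonneg (lam + 1))
    linarith
  · unfold nL1
    rw [OS.nL1_eq, OS.nL1_eq]
    linarith
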